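/- arXiv:1307.5727 — 2 statements merged into one kernel-verified Lean document; each statement's English description precedes it below -/
import Mathlib

section
/- Let H be a fixed connected planar graph with more edges than vertices (e(H) > |H|), and let m:ℕ→ℕ satisfy m(n) ≤ (1+o(1))n as n→∞, with 𝒫(n,m(n)) nonempty for all large n. Then the probability that P_{n,m(n)} has a component isomorphic to H tends to 0 as n→∞. -/
/-!
Let `h = |H|`. Delete the edges of a component isomorphic to `H` and turn its `h` vertices, which
are now isolated, into leaves attached elsewhere. The isolated vertices are among at most `n ^ h`
ordered tuples, and each becomes a leaf in about `n` ways, so up to the factor `2 ^ h` there are at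
most as many graphs with such a component as there are graphs in `𝒫(n, m - e(H) + h)`. As
`e(H) > h`, these graphs have fewer than `m` edges, and it is enough that each additional edge
multiplies the number of planar graphs by an arbitrarily large factor. Double counting the pairs
`(G, G + e)` reduces this to showing that a planar graph with at most `(1 + o(1)) n` edges has
superlinearly many addable non-edges.

If there are many components, any two of them can be joined by an edge. Otherwise the cyclomatic
number is `o(n)`. Strip leaves, letting each of them join the class of its neighbour; then `o(n)`
vertices have degree other than `2`, and the rest form `o(n)` chains within each of which an edge
can be added between any two vertices. So the vertices split into `o(n)` classes of pairwise
joinable vertices, and by Cauchy–Schwarz there are superlinearly many pairs within the classes.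

In Wagner's characterization, all that matters about `K₅` and `K₃,₃` is that any two of their
vertices that are equal or nonadjacent have three common neighbours. A minor model of such a graph
never needs a vertex of degree at most two, and it lies essentially on one side of a bridge.
-/

open SimpleGraph Filter Asymptotics

/-- `H` is a minor of `G`: to each vertex of `H` we can assign a connected nonempty
branch set in `G`, pairwise disjoint, with an edge of `G` between the branch sets of
any two adjacent vertices of `H`. -/
def IsMinor {α β : Type*} (H : SimpleGraph α) (G : SimpleGraph β) : Prop :=
  ∃ f : α → Set β,
    (∀ a, (G.induce (f a)).Connected) ∧
    (∀ a b, a ≠ b → Disjoint (f a) (f b)) ∧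
    (∀ a b, H.Adj a b → ∃ u ∈ f a, ∃ v ∈ f b, G.Adj u v)

/-- A graph is planar iff it has neither a `K₅`-minor nor a `K₃,₃`-minor
(Wagner's theorem). -/
def IsPlanar {V : Type*} (G : SimpleGraph V) : Prop :=
  ¬ IsMinor (completeGraph (Fin 5)) G ∧
    ¬ IsMinor (completeBipartiteGraph (Fin 3) (Fin 3)) G

/-- The number of edges of a graph. -/
noncomputable def edgeCount {V : Type*} (G : SimpleGraph V) : ℕ :=
  G.edgeSet.ncard

/-- The degree of a vertex. -/
noncomputable def vertexDegree {V : Type*} (G : SimpleGraph V) (v : V) : ℕ :=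
  (G.neighborSet v).ncard

/-- `𝒫(n,m)`: the set of labelled planar graphs on `{1,…,n}` with exactly `m` edges. -/
def planarSet (n m : ℕ) : Set (SimpleGraph (Fin n)) :=
  {G | IsPlanar G ∧ edgeCount G = m}

/-- The probability that the uniform random planar graph `P_{n,m}` satisfies `P`. -/
noncomputable def planarProb (n m : ℕ) (P : SimpleGraph (Fin n) → Prop) : ℝ :=
  ({G ∈ planarSet n m | P G}.ncard : ℝ) / ((planarSet n m).ncard : ℝ)

/-- The number of pendant edges (edges incident to a vertex of degree 1). -/
noncomputable def pendantCount {V : Type*} (G : SimpleGraph V) : ℕ :=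
  {e ∈ G.edgeSet | ∃ v ∈ e, vertexDegree G v = 1}.ncard

/-- The set of addable non-edges of `G`: non-edges whose addition keeps the graph planar. -/
def addableSet {V : Type*} (G : SimpleGraph V) : Set (Sym2 V) :=
  {e | ¬ e.IsDiag ∧ e ∉ G.edgeSet ∧ IsPlanar (G ⊔ SimpleGraph.fromEdgeSet {e})}

/-- `add(n,m)`: the minimum number of addable non-edges over all graphs in `𝒫(n,m)`. -/
noncomputable def addMin (n m : ℕ) : ℕ :=
  sInf ((fun G => (addableSet G).ncard) '' planarSet n m)

/-- `W` carries an induced order-preserving copy of `H` in `G`: the increasing bijection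
from `{1,…,h}` to `W` is an isomorphism between `H` and the induced subgraph `G[W]`. -/
def IsOrderCopy {h n : ℕ} (H : SimpleGraph (Fin h)) (G : SimpleGraph (Fin n))
    (W : Finset (Fin n)) : Prop :=
  ∃ hW : W.card = h,
    ∀ i j : Fin h,
      H.Adj i j ↔ G.Adj ((W.orderIsoOfFin hW i : Fin n)) ((W.orderIsoOfFin hW j : Fin n))

/-- `W` is the vertex set of a connected component of `G`. -/
def IsComponent {V : Type*} (G : SimpleGraph V) (W : Finset V) : Prop :=
  (G.induce (W : Set V)).Connected ∧ ∀ v ∈ W, ∀ u, G.Adj v u → u ∈ W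

/-- The number of components of `G` admitting an order-preserving isomorphism to `H`. -/
noncomputable def numOrderComponents {h n : ℕ} (H : SimpleGraph (Fin h))
    (G : SimpleGraph (Fin n)) : ℕ :=
  {W : Finset (Fin n) | IsComponent G W ∧ IsOrderCopy H G W}.ncard

/-- The number of distinct cycles (as subgraphs, identified with their edge sets) of
length at most `k` in `S`. -/
noncomputable def cycleCountLe {V : Type*} (S : SimpleGraph V) (k : ℕ) : ℕ :=
  {E : Set (Sym2 V) | ∃ (v : V) (c : S.Walk v v),
    c.IsCycle ∧ c.length ≤ k ∧ {e | e ∈ c.edges} = E}.ncard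

/-! ### Connected sets -/

section Connected

variable {V W : Type*} {G : SimpleGraph V} {G' : SimpleGraph W}

theorem reachable_map {r : V → W} (hr : ∀ u w, G.Adj u w → G'.Reachable (r u) (r w)) {u w : V}
    (h : G.Reachable u w) : G'.Reachable (r u) (r w) := by
  simp only [reachable_iff_reflTransGen] at h hr ⊢
  exact h.lift' r hr

theorem connected_of_map (hG : G.Connected) {r : V → W}
    (hr : ∀ u w, G.Adj u w → G'.Reachable (r u) (r w))
    (hsurj : ∀ w, ∃ v, G'.Reachable w (r v)) : G'.Connected := by
  have : Nonempty W := hG.nonempty.map r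
  refine ⟨fun w w' => ?_⟩
  obtain ⟨v, hv⟩ := hsurj w
  obtain ⟨v', hv'⟩ := hsurj w'
  exact (hv.trans (reachable_map hr (hG.preconnected v v'))).trans hv'.symm

theorem connected_induce_of_surjOn {s : Set V} {t : Set W} (hs : (G.induce s).Connected)
    {r : V → W} (hmaps : Set.MapsTo r s t) (hsurj : Set.SurjOn r s t)
    (hr : ∀ u ∈ s, ∀ w ∈ s, G.Adj u w → r u = r w ∨ G'.Adj (r u) (r w)) :
    (G'.induce t).Connected := by
  let r' : s → t := fun u => ⟨r u, hmaps u.2⟩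
  refine connected_of_map hs (r := r') (fun u w huw => ?_) fun w => ?_
  · rcases hr u u.2 w w.2 huw with h | h
    · rw [show r' u = r' w from Subtype.ext h]
    · exact Adj.reachable (by exact h)
  · obtain ⟨v, hv, hvw⟩ := hsurj w.2
    exact ⟨⟨v, hv⟩, by rw [show r' ⟨v, hv⟩ = w from Subtype.ext hvw]⟩

theorem exists_adj_of_connected_induce {s A : Set V} (hs : (G.induce s).Connected) {u w : V}
    (hu : u ∈ s) (hw : w ∈ s) (huA : u ∈ A) (hwA : w ∉ A) :
    ∃ p ∈ s, ∃ q ∈ s, G.Adj p q ∧ p ∈ A ∧ q ∉ A := by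
  obtain ⟨p⟩ := hs.preconnected ⟨u, hu⟩ ⟨w, hw⟩
  obtain ⟨d, -, hd, hd'⟩ := p.exists_boundary_dart (Subtype.val ⁻¹' A) huA hwA
  exact ⟨d.fst, d.fst.2, d.snd, d.snd.2, d.adj, hd, hd'⟩

end Connected

/-! ### Minor models and robust minors -/

/-- A minor model: `f` assigns branch sets witnessing that `M` is a minor of `G`. -/
structure IsMinorModel {α V : Type*} (M : SimpleGraph α) (G : SimpleGraph V) (f : α → Set V) :
    Prop where
  connected : ∀ c, (G.induce (f c)).Connected
  disjoint : ∀ c d, c ≠ d → Disjoint (f c) (f d)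
  exists_adj : ∀ c d, M.Adj c d → ∃ u ∈ f c, ∃ w ∈ f d, G.Adj u w

/-- A graph is robust if any two vertices that are equal or nonadjacent have at least three common
neighbours. This is the only property of `K₅` and `K₃,₃` that planarity arguments use; for
equal vertices it says that all degrees are at least three. -/
def Robust {α : Type*} (M : SimpleGraph α) : Prop :=
  ∀ a b, ¬ M.Adj a b → ∀ c c', ∃ d, M.Adj a d ∧ M.Adj d b ∧ d ≠ c ∧ d ≠ c'

theorem robust_completeGraph_five : Robust (completeGraph (Fin 5)) := by
  simp only [Robust, completeGraph, top_adj]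
  decide

theorem robust_completeBipartiteGraph_three_three :
    Robust (completeBipartiteGraph (Fin 3) (Fin 3)) := by
  simp only [Robust, completeBipartiteGraph]
  set_option synthInstance.maxSize 1000 in
  decide

theorem isMinor_iff_exists_isMinorModel {α V : Type*} {M : SimpleGraph α} {G : SimpleGraph V} :
    IsMinor M G ↔ ∃ f, IsMinorModel M G f :=
  ⟨fun ⟨f, h₁, h₂, h₃⟩ => ⟨f, h₁, h₂, h₃⟩, fun ⟨f, h₁, h₂, h₃⟩ => ⟨f, h₁, h₂, h₃⟩⟩

theorem IsPlanar.of_robust_minor {V W : Type*} {G : SimpleGraph V} {G' : SimpleGraph W}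
    (hG : IsPlanar G)
    (h : ∀ {α : Type} {M : SimpleGraph α} {f : α → Set W}, Robust M → IsMinorModel M G' f →
      ∃ f', IsMinorModel M G f') : IsPlanar G' := by
  simp only [IsPlanar, isMinor_iff_exists_isMinorModel] at hG ⊢
  exact ⟨fun ⟨_, hf⟩ => hG.1 (h robust_completeGraph_five hf),
    fun ⟨_, hf⟩ => hG.2 (h robust_completeBipartiteGraph_three_three hf)⟩

namespace IsMinorModel

variable {α V : Type*} {M : SimpleGraph α} {G G' : SimpleGraph V} {f : α → Set V}

theorem mono (hle : G ≤ G') (hf : IsMinorModel M G f) : IsMinorModel M G' f where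
  connected c := (hf.connected c).mono fun _ _ h => hle h
  disjoint := hf.disjoint
  exists_adj c d hcd :=
    let ⟨u, hu, w, hw, huw⟩ := hf.exists_adj c d hcd
    ⟨u, hu, w, hw, hle huw⟩

theorem eq_of_mem (hf : IsMinorModel M G f) {c d : α} {u : V} (hc : u ∈ f c) (hd : u ∈ f d) :
    c = d :=
  by_contra fun hcd => Set.disjoint_left.mp (hf.disjoint c d hcd) hc hd

theorem exists_common_adj (hf : IsMinorModel M G f) (hM : Robust M) {a b : α}
    (hab : ¬ M.Adj a b) (p q : V) : ∃ d, M.Adj a d ∧ M.Adj d b ∧ p ∉ f d ∧ q ∉ f d := by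
  have owner : ∀ z, ∃ c, ∀ d, z ∈ f d → d = c := fun z => by
    by_cases hz : ∃ c, z ∈ f c
    · exact hz.imp fun c hc d hd => hf.eq_of_mem hd hc
    · exact ⟨a, fun d hd => (hz ⟨d, hd⟩).elim⟩
  obtain ⟨c, hc⟩ := owner p
  obtain ⟨c', hc'⟩ := owner q
  obtain ⟨d, had, hdb, hdc, hdc'⟩ := hM a b hab c c'
  exact ⟨d, had, hdb, fun h => hdc (hc d h), fun h => hdc' (hc' d h)⟩

/-! ### Suppressing and inserting vertices -/

theorem exists_adj_mem_of_degree_le_two (hf : IsMinorModel M G f) (hM : Robust M) {v a b : V}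
    (hv : ∀ u, G.Adj v u → u = a ∨ u = b) {c : α} (hc : v ∈ f c) : ∃ p ∈ f c, G.Adj v p := by
  obtain ⟨d, hcd, -, had, hbd⟩ := hf.exists_common_adj hM (M.irrefl (v := c)) a b
  obtain ⟨u, hu, w, hw, huw⟩ := hf.exists_adj c d hcd
  have huv : u ≠ v := by
    rintro rfl
    rcases hv w huw with rfl | rfl
    exacts [had hw, hbd hw]
  obtain ⟨p, _, q, hq, hpq, rfl, -⟩ :=
    exists_adj_of_connected_induce (A := {v}) (hf.connected c) hc hu rfl huv
  exact ⟨q, hq, hpq⟩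

theorem suppress (hf : IsMinorModel M G f) (hM : Robust M) {v a b : V}
    (hv : ∀ u, G.Adj v u → u = a ∨ u = b)
    (hle : ∀ u w, u ≠ v → w ≠ v → G.Adj u w → G'.Adj u w)
    (hpair : ∀ u w, G.Adj v u → G.Adj v w → u ≠ w → G'.Adj u w) :
    IsMinorModel M G' fun c => f c \ {v} where
  connected c := by
    classical
    by_cases hc : v ∈ f c
    · obtain ⟨p, hp, hvp⟩ := hf.exists_adj_mem_of_degree_le_two hM hv hc
      refine connected_induce_of_surjOn (hf.connected c) (r := Function.update id v p)
        (fun u hu => ?_) (fun u hu => ⟨u, hu.1, Function.update_of_ne hu.2 _ _⟩)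
        fun u _ w _ huw => ?_
      · rcases eq_or_ne u v with rfl | huv
        · simpa using ⟨hp, hvp.ne'⟩
        · simpa [huv] using hu
      · have := huw.ne
        have := hle u w
        have := hpair p w hvp
        have := hpair u p
        grind [Function.update_apply, G.adj_comm]
    · refine connected_induce_of_surjOn (hf.connected c) (r := id)
        (fun u hu => ⟨hu, fun h => hc (h ▸ hu)⟩) (fun u hu => ⟨u, hu.1, rfl⟩) fun u hu w hw h => ?_
      exact .inr (hle u w (fun h => hc (h ▸ hu)) (fun h => hc (h ▸ hw)) h)
  disjoint c d hcd := (hf.disjoint c d hcd).mono Set.sdiff_subset Set.sdiff_subset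
  exists_adj c d hcd := by
    have hdisj : ∀ p ∈ f c, ∀ q ∈ f d, p ≠ q := fun p hp q hq hpq =>
      hcd.ne (hf.eq_of_mem hp (hpq ▸ hq))
    obtain ⟨u, hu, w, hw, huw⟩ := hf.exists_adj c d hcd
    rcases eq_or_ne u v with rfl | huv
    · obtain ⟨p, hp, hvp⟩ := hf.exists_adj_mem_of_degree_le_two hM hv hu
      exact ⟨p, ⟨hp, hvp.ne'⟩, w, ⟨hw, huw.ne'⟩, hpair p w hvp huw (hdisj p hp w hw)⟩
    rcases eq_or_ne w v with rfl | hwv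
    · obtain ⟨p, hp, hvp⟩ := hf.exists_adj_mem_of_degree_le_two hM hv hw
      exact ⟨u, ⟨hu, huw.ne⟩, p, ⟨hp, hvp.ne'⟩, hpair u p huw.symm hvp (hdisj u hu p hp)⟩
    exact ⟨u, ⟨hu, huv⟩, w, ⟨hw, hwv⟩, hle u w huv hwv huw⟩

theorem uncontract (hf : IsMinorModel M G' f) {y z : V} (hyz : G.Adj y z) (hy : ∀ c, y ∉ f c)
    (hadj : ∀ u w, G'.Adj u w → G.Adj u w ∨ (u = z ∧ G.Adj y w) ∨ (w = z ∧ G.Adj y u)) :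
    IsMinorModel M G fun c => f c ∪ {u | u = y ∧ z ∈ f c} where
  connected c := by
    set t := f c ∪ {u | u = y ∧ z ∈ f c}
    have hst : f c ⊆ t := Set.subset_union_left
    have reach : ∀ u (hu : u ∈ t) w (hw : w ∈ t), G.Adj u w →
        (G.induce t).Reachable ⟨u, hu⟩ ⟨w, hw⟩ := fun u hu w hw huw => Adj.reachable (by exact huw)
    refine connected_of_map (hf.connected c) (r := Set.inclusion hst) ?_ ?_
    · rintro ⟨u, hu⟩ ⟨w, hw⟩ huw
      rcases hadj u w huw with h | ⟨rfl, h⟩ | ⟨rfl, h⟩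
      · exact reach _ _ _ _ h
      · have hyt : y ∈ t := .inr ⟨rfl, hu⟩
        exact (reach _ (hst hu) _ hyt hyz.symm).trans (reach _ hyt _ _ h)
      · have hyt : y ∈ t := .inr ⟨rfl, hw⟩
        exact (reach _ (hst hu) _ hyt h.symm).trans (reach _ hyt _ _ hyz)
    · rintro ⟨u, hu | ⟨rfl, hz⟩⟩
      · exact ⟨⟨u, hu⟩, .refl _⟩
      · exact ⟨⟨z, hz⟩, reach _ _ _ _ hyz⟩
  disjoint c d hcd := by
    have := Set.disjoint_left.mp (hf.disjoint c d hcd)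
    have := hy c
    have := hy d
    rw [Set.disjoint_left]
    grind
  exists_adj c d hcd := by
    obtain ⟨u, hu, w, hw, huw⟩ := hf.exists_adj c d hcd
    rcases hadj u w huw with h | ⟨rfl, h⟩ | ⟨rfl, h⟩
    exacts [⟨u, .inl hu, w, .inl hw, h⟩, ⟨y, .inr ⟨rfl, hu⟩, w, .inl hw, h⟩,
      ⟨u, .inl hu, y, .inr ⟨rfl, hw⟩, h.symm⟩]

/-! ### Bridges -/

theorem endpoints_mem_of_crossing {A : Set V} {x y : V}
    (hA : ∀ u ∈ A, ∀ w ∉ A, G.Adj u w → u = x ∧ w = y) (hf : IsMinorModel M G f) {c : α}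
    (hc : (f c ∩ A).Nonempty) (hc' : (f c ∩ Aᶜ).Nonempty) : x ∈ f c ∧ y ∈ f c := by
  obtain ⟨u, hu, huA⟩ := hc
  obtain ⟨w, hw, hwA⟩ := hc'
  obtain ⟨p, hp, q, hq, hpq, hpA, hqA⟩ :=
    exists_adj_of_connected_induce (hf.connected c) hu hw huA hwA
  obtain ⟨rfl, rfl⟩ := hA p hpA q hqA hpq
  exact ⟨hp, hq⟩

theorem inter_of_bridge {A : Set V} {x y : V}
    (hA : ∀ u ∈ A, ∀ w ∉ A, G.Adj u w → u = x ∧ w = y) (hx : x ∈ A)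
    (hle : ∀ u ∈ A, ∀ w ∈ A, G.Adj u w → G'.Adj u w) (hf : IsMinorModel M G f)
    (hmeet : ∀ c, (f c ∩ A).Nonempty) : IsMinorModel M G' fun c => f c ∩ A where
  connected c := by
    classical
    have hxc : ∀ u ∈ f c, u ∉ A → x ∈ f c := fun u hu huA =>
      (hf.endpoints_mem_of_crossing hA (hmeet c) ⟨u, hu, huA⟩).1
    refine connected_induce_of_surjOn (hf.connected c) (r := fun u => if u ∈ A then u else x)
      (fun u hu => ?_) (fun u hu => ⟨u, hu.1, if_pos hu.2⟩) fun u _ w _ huw => ?_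
    · dsimp only
      split_ifs with huA
      exacts [⟨hu, huA⟩, ⟨hxc u hu huA, hx⟩]
    · split_ifs with huA hwA hwA
      exacts [.inr (hle u huA w hwA huw), .inl (hA u huA w hwA huw).1,
        .inl (hA w hwA u huA huw.symm).1.symm, .inl rfl]
  disjoint c d hcd := (hf.disjoint c d hcd).mono Set.inter_subset_left Set.inter_subset_left
  exists_adj c d hcd := by
    have hxe : ∀ e, ∀ u ∈ f e, u ∉ A → x ∈ f e := fun e u hu huA =>
      (hf.endpoints_mem_of_crossing hA (hmeet e) ⟨u, hu, huA⟩).1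
    obtain ⟨u, hu, w, hw, huw⟩ := hf.exists_adj c d hcd
    by_cases huA : u ∈ A <;> by_cases hwA : w ∈ A
    · exact ⟨u, ⟨hu, huA⟩, w, ⟨hw, hwA⟩, hle u huA w hwA huw⟩
    · obtain ⟨rfl, -⟩ := hA u huA w hwA huw
      exact (hcd.ne (hf.eq_of_mem hu (hxe d w hw hwA))).elim
    · obtain ⟨rfl, -⟩ := hA w hwA u huA huw.symm
      exact (hcd.ne (hf.eq_of_mem (hxe c u hu huA) hw)).elim
    · exact (hcd.ne (hf.eq_of_mem (hxe c u hu huA) (hxe d w hw hwA))).elim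

theorem endpoints_mem_of_separated {A : Set V} {x y : V}
    (hA : ∀ u ∈ A, ∀ w ∉ A, G.Adj u w → u = x ∧ w = y) (hM : Robust M)
    (hf : IsMinorModel M G f) {d c : α} (hd : f d ⊆ A) (hc : f c ⊆ Aᶜ) : x ∈ f d ∧ y ∈ f c := by
  have of_adj : ∀ {a b}, f a ⊆ A → f b ⊆ Aᶜ → M.Adj a b → x ∈ f a ∧ y ∈ f b := fun ha hb hab => by
    obtain ⟨u, hu, w, hw, huw⟩ := hf.exists_adj _ _ hab
    obtain ⟨rfl, rfl⟩ := hA u (ha hu) w (hb hw) huw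
    exact ⟨hu, hw⟩
  by_contra hcon
  obtain ⟨e, hde, hec, hxe, hye⟩ :=
    hf.exists_common_adj hM (fun hdc => hcon (of_adj hd hc hdc)) x y
  by_cases he : f e ⊆ A
  · exact hxe (of_adj he hc hec).1
  · obtain ⟨w, hw, hwA⟩ := Set.not_subset.mp he
    refine hye (of_adj hd (fun u hu huA => hxe ?_) hde).2
    exact (hf.endpoints_mem_of_crossing hA ⟨u, hu, huA⟩ ⟨w, hw, hwA⟩).1

theorem forall_meet_or_forall_meet_compl {A : Set V} {x y : V}
    (hA : ∀ u ∈ A, ∀ w ∉ A, G.Adj u w → u = x ∧ w = y) (hM : Robust M)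
    (hf : IsMinorModel M G f) : (∀ c, (f c ∩ A).Nonempty) ∨ ∀ c, (f c ∩ Aᶜ).Nonempty := by
  by_contra! ⟨⟨c, hc⟩, ⟨d, hd⟩⟩
  rw [← Set.disjoint_iff_inter_eq_empty] at hc hd
  rw [← Set.subset_compl_iff_disjoint_right] at hc
  rw [Set.disjoint_compl_right_iff_subset] at hd
  obtain ⟨e, -, -, hxe, hye⟩ := hf.exists_common_adj hM (M.irrefl (v := d)) x y
  by_cases he : f e ⊆ A
  · exact hxe (hf.endpoints_mem_of_separated hA hM he hc).1
  · obtain ⟨w, hw, hwA⟩ := Set.not_subset.mp he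
    refine hye (hf.endpoints_mem_of_separated hA hM hd fun u hu huA => hxe ?_).2
    exact (hf.endpoints_mem_of_crossing hA ⟨u, hu, huA⟩ ⟨w, hw, hwA⟩).1

end IsMinorModel

/-! ### Operations preserving planarity -/

namespace IsPlanar

variable {V : Type*} {G G' : SimpleGraph V}

theorem mono (hle : G' ≤ G) (hG : IsPlanar G) : IsPlanar G' :=
  hG.of_robust_minor fun _ hf => ⟨_, hf.mono hle⟩

theorem sup_edge_of_not_reachable (hG : IsPlanar G) {x y : V} (hxy : ¬ G.Reachable x y) :
    IsPlanar (G ⊔ edge x y) := by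
  set A : Set V := {u | G.Reachable x u}
  have hGA : ∀ u w, G.Adj u w → (u ∈ A ↔ w ∈ A) := fun u w huw =>
    ⟨fun h => h.trans huw.reachable, fun h => h.trans huw.symm.reachable⟩
  have hxA : x ∈ A := Reachable.refl x
  have hyA : y ∉ A := hxy
  have hle : ∀ u w, (u ∈ A ↔ w ∈ A) → (G ⊔ edge x y).Adj u w → G.Adj u w := by
    intro u w
    clear hGA
    grind
  have hA : ∀ u ∈ A, ∀ w ∉ A, (G ⊔ edge x y).Adj u w → u = x ∧ w = y := by
    intro u hu w hw huw
    have := hGA u w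
    grind
  refine hG.of_robust_minor fun hM hf => ?_
  rcases hf.forall_meet_or_forall_meet_compl hA hM with hmeet | hmeet
  · exact ⟨_, hf.inter_of_bridge hA hxA (fun u hu w hw => hle u w (iff_of_true hu hw)) hmeet⟩
  · refine ⟨_, hf.inter_of_bridge (A := Aᶜ) (x := y) (y := x) (fun u hu w hw huw => ?_) hyA
      (fun u hu w hw => hle u w (iff_of_false hu hw)) hmeet⟩
    exact (hA w (not_not.mp hw) u hu huw.symm).symm

theorem sup_edge_update_leaf [DecidableEq V] {v w x y : V} (hv : ∀ u, G.Adj v u → u = w)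
    (h : IsPlanar (G.deleteIncidenceSet v ⊔
      edge (Function.update id v w x) (Function.update id v w y))) : IsPlanar (G ⊔ edge x y) := by
  refine h.of_robust_minor fun hM hf =>
    ⟨_, hf.suppress hM (v := v) (a := w) (b := if x = v then y else x) ?_ ?_ ?_⟩
  · intro u
    have := hv u
    grind
  · intro u z
    grind [deleteIncidenceSet_adj, Function.update_apply]
  · intro u z
    have := hv u
    have := hv z
    grind [deleteIncidenceSet_adj, Function.update_apply]

theorem sup_edge_of_neighborSet_eq_pair {x y z z' : V} (hxy : x ≠ y)
    (hy : G.neighborSet y = {z, z'}) (h : IsPlanar (G ⊔ edge x y)) : IsPlanar (G ⊔ edge x z) := by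
  have hy' : ∀ u, G.Adj y u ↔ u = z ∨ u = z' := fun u => Set.ext_iff.mp hy u
  have hyz := (hy' z).mpr (.inl rfl)
  have hyz_ne := hyz.ne
  refine h.of_robust_minor fun hM hf => ?_
  -- Both graphs contract to this one along an edge at `y`.
  set C := (G ⊔ edge x z).deleteIncidenceSet y ⊔ edge z z'
  refine ⟨_, (hf.suppress hM (G' := C) (v := y) (a := z) (b := z') ?_ ?_ ?_).uncontract
    (y := y) (z := z) (.inl hyz) (by simp) ?_⟩
  · intro u
    grind
  · intro u w hu hw huw
    exact .inl (deleteIncidenceSet_adj.mpr ⟨huw, hu, hw⟩)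
  · intro u w
    grind
  · intro u w
    grind [deleteIncidenceSet_adj]

end IsPlanar

/-! ### Degrees and edge counts -/

section EdgeCount

variable {V : Type*} {G G' : SimpleGraph V} {v w : V}

theorem sum_vertexDegree [Fintype V] (G : SimpleGraph V) :
    ∑ v, vertexDegree G v = 2 * edgeCount G := by
  classical
  rw [edgeCount, Set.ncard_eq_toFinset_card', ← edgeFinset, ← sum_degrees_eq_twice_card_edges]
  exact Finset.sum_congr rfl fun v _ => by
    rw [vertexDegree, Set.ncard_eq_toFinset_card', ← neighborFinset_def,
      card_neighborFinset_eq_degree]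

theorem edgeCount_sup_edge [Finite V] (hne : v ≠ w) (h : ¬ G.Adj v w) :
    edgeCount (G ⊔ edge v w) = edgeCount G + 1 := by
  rw [edgeCount, edgeSet_sup, edgeSet_edge_of_ne hne, Set.union_singleton,
    Set.ncard_insert_of_notMem (by simpa using h), edgeCount]

theorem edgeCount_map {α : Type*} (H : SimpleGraph α) (φ : α ↪ V) :
    edgeCount (H.map φ) = edgeCount H := by
  rw [edgeCount, edgeSet_map, Set.ncard_image_of_injective _ φ.sym2Map.injective, edgeCount]

theorem edgeCount_le_of_le [Finite V] (h : G ≤ G') :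
    edgeCount G ≤ edgeCount G' :=
  Set.ncard_le_ncard (edgeSet_mono h)

theorem edgeCount_sdiff_of_le [Finite V] (h : G ≤ G') :
    edgeCount (G' \ G) = edgeCount G' - edgeCount G := by
  rw [edgeCount, edgeSet_sdiff, Set.ncard_sdiff (edgeSet_mono h), edgeCount, edgeCount]

theorem vertexDegree_eq_zero_iff [Finite V] : vertexDegree G v = 0 ↔ ∀ u, ¬ G.Adj v u := by
  rw [vertexDegree, Set.ncard_eq_zero, Set.eq_empty_iff_forall_notMem]
  rfl

theorem vertexDegree_eq_one_iff : vertexDegree G v = 1 ↔ ∃ w, ∀ u, G.Adj v u ↔ u = w := by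
  rw [vertexDegree, Set.ncard_eq_one]
  simp only [Set.ext_iff, mem_neighborSet, Set.mem_singleton_iff]

theorem exists_neighborSet_eq_pair (hv : vertexDegree G v = 2) (hw : G.Adj v w) :
    ∃ w', G.neighborSet v = {w, w'} := by
  obtain ⟨a, b, -, hab⟩ := Set.ncard_eq_two.mp hv
  have hmem : w ∈ G.neighborSet v := hw
  rw [hab] at hmem
  rcases hmem with rfl | rfl
  exacts [⟨b, hab⟩, ⟨a, by rw [hab, Set.pair_comm]⟩]

theorem eq_of_reachable_of_vertexDegree_eq_zero [Finite V] (hv : vertexDegree G v = 0)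
    (h : G.Reachable v w) : v = w := by
  by_contra hne
  obtain ⟨u, hu⟩ := h.nonempty_neighborSet_left hne
  exact vertexDegree_eq_zero_iff.mp hv u hu

end EdgeCount

/-! ### Colouring the non-addable pairs -/

section Colouring

variable {V : Type*} {G : SimpleGraph V}

/-- The graph of the pairs that may be joined while staying planar: for planar `G` its edges are
those of `G` together with the addable non-edges. -/
def joinGraph (G : SimpleGraph V) : SimpleGraph V where
  Adj x y := x ≠ y ∧ IsPlanar (G ⊔ edge x y)
  symm := ⟨fun x y h => ⟨h.1.symm, edge_comm x y ▸ h.2⟩⟩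
  loopless := ⟨fun _ h => h.1 rfl⟩

/-- The cyclomatic number `e(G) + κ(G) - |G|`, the dimension of the cycle space. The truncated
subtraction is harmless, as `|G| ≤ e(G) + κ(G)` for finite `G`. -/
noncomputable def cyclomaticNumber (G : SimpleGraph V) : ℕ :=
  edgeCount G + Nat.card G.ConnectedComponent - Nat.card V

/-- The chains of `G`: the graph induced on the vertices of degree two. -/
def chainGraph (G : SimpleGraph V) : SimpleGraph V where
  Adj u w := G.Adj u w ∧ vertexDegree G u = 2 ∧ vertexDegree G w = 2
  symm := ⟨fun _ _ h => ⟨h.1.symm, h.2.2, h.2.1⟩⟩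
  loopless := ⟨fun _ h => h.1.ne rfl⟩

/-- The closed neighbourhood of the set of branch vertices, those of degree at least three. -/
def branchNeighborhood (G : SimpleGraph V) : Set V :=
  ⋃ b ∈ {b | 3 ≤ vertexDegree G b}, insert b (G.neighborSet b)

/-- A set of vertices meeting every component of `chainGraph G` other than the isolated vertices
of `G`, provided `G` has no leaves: one vertex of each nontrivial component of `G`, which serves
the components that are cycles, and all branch vertices and their neighbours. -/
def chainRoots (G : SimpleGraph V) : Set V :=
  (Set.range (fun c : G.ConnectedComponent => c.out) \ {v | vertexDegree G v = 0}) ∪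
    branchNeighborhood G

theorem addableSet_eq_sdiff : addableSet G = (joinGraph G).edgeSet \ G.edgeSet := by
  ext e
  induction e with
  | h x y =>
    simp only [addableSet, joinGraph, edge, Set.mem_ofPred_eq, Sym2.mk_isDiag_iff, mem_edgeSet,
      Set.mem_sdiff]
    tauto

theorem IsPlanar.compl_joinGraph_adj (hG : IsPlanar G) {x y : V} :
    (joinGraph G)ᶜ.Adj x y ↔ ¬ IsPlanar (G ⊔ edge x y) := by
  rcases eq_or_ne x y with rfl | hxy
  · simpa using hG
  · simp [compl_adj, joinGraph, hxy]

theorem IsPlanar.sup_edge_of_chainGraph_reachable (hG : IsPlanar G) {x y : V}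
    (h : (chainGraph G).Reachable x y) : IsPlanar (G ⊔ edge x y) := by
  rw [reachable_iff_reflTransGen] at h
  induction h with
  | refl => simpa using hG
  | @tail u w _ huw ih =>
    rcases eq_or_ne x u with rfl | hxu
    · rwa [sup_edge_of_adj _ huw.1]
    · obtain ⟨w', hw'⟩ := exists_neighborSet_eq_pair huw.2.1 huw.1
      exact ih.sup_edge_of_neighborSet_eq_pair hxu hw'

theorem vertexDegree_eq_two_of_chainGraph_reachable {x y : V} (h : (chainGraph G).Reachable x y)
    (hx : vertexDegree G x = 2) : vertexDegree G y = 2 := by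
  rw [reachable_iff_reflTransGen] at h
  induction h with
  | refl => exact hx
  | tail _ h _ => exact h.2.2

theorem IsPlanar.colorable_compl_joinGraph_of_chainGraph_reachable [Finite V] (hG : IsPlanar G)
    {R : Set V} (hR : ∀ x, vertexDegree G x ≠ 0 → ∃ r ∈ R, (chainGraph G).Reachable r x) :
    (joinGraph G)ᶜ.Colorable (1 + R.ncard) := by
  classical
  choose root hroot hreach using hR
  let C : (joinGraph G)ᶜ.Coloring (Option R) := Coloring.mk
    (fun x => if hx : vertexDegree G x = 0 then none else some ⟨root x hx, hroot x hx⟩) <| by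
      intro x y hxy hcol
      have hne := hxy.ne
      rw [hG.compl_joinGraph_adj] at hxy
      split_ifs at hcol with hx hy hy
      · exact hxy (hG.sup_edge_of_not_reachable
          fun h => hne (eq_of_reachable_of_vertexDegree_eq_zero hx h))
      · simp only [Option.some.injEq, Subtype.mk.injEq] at hcol
        exact hxy (hG.sup_edge_of_chainGraph_reachable
          ((hreach x hx).symm.trans (hcol ▸ hreach y hy)))
  have : Fintype R := Fintype.ofFinite R
  have hcard : Fintype.card (Option R) = 1 + R.ncard := by
    rw [Fintype.card_option, add_comm, ← Nat.card_eq_fintype_card, Nat.card_coe_set_eq]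
  exact hcard ▸ C.colorable

theorem exists_mem_chainRoots_reachable [Finite V] (hleaf : ∀ v, vertexDegree G v ≠ 1) {x : V}
    (hx : vertexDegree G x ≠ 0) : ∃ r ∈ chainRoots G, (chainGraph G).Reachable r x := by
  by_cases hx3 : 3 ≤ vertexDegree G x
  · exact ⟨x, .inr (Set.mem_biUnion hx3 (Set.mem_insert _ _)), .refl _⟩
  have hx2 : vertexDegree G x = 2 := by
    have := hleaf x
    omega
  set T := {u | (chainGraph G).Reachable x u}
  have hT : ∀ u ∈ T, vertexDegree G u = 2 := fun u hu =>
    vertexDegree_eq_two_of_chainGraph_reachable hu hx2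
  set r := (G.connectedComponentMk x).out
  by_cases hr : r ∈ T
  · exact ⟨r, .inl ⟨⟨_, rfl⟩, by simp [hT r hr]⟩, hr.symm⟩
  have hxr : G.Reachable x r := ConnectedComponent.exact (Quot.out_eq _).symm
  obtain ⟨p⟩ := hxr
  obtain ⟨d, -, hu, hw⟩ := p.exists_boundary_dart T (Reachable.refl x) hr
  have hw3 : 3 ≤ vertexDegree G d.snd := by
    have hw0 : vertexDegree G d.snd ≠ 0 := fun h =>
      vertexDegree_eq_zero_iff.mp h _ d.adj.symm
    have hw2 : vertexDegree G d.snd ≠ 2 := fun h =>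
      hw (Reachable.trans hu (Adj.reachable ⟨d.adj, hT _ hu, h⟩))
    have := hleaf d.snd
    omega
  exact ⟨d.fst, .inr (Set.mem_biUnion hw3 (.inr d.adj.symm)), Reachable.symm hu⟩

theorem connectedComponent_out_injective (G : SimpleGraph V) :
    Function.Injective fun c : G.ConnectedComponent => c.out :=
  Function.LeftInverse.injective (g := G.connectedComponentMk) Quot.out_eq

theorem ncard_range_out_sdiff [Finite V] :
    (Set.range (fun c : G.ConnectedComponent => c.out) \ {v | vertexDegree G v = 0}).ncard +
      {v | vertexDegree G v = 0}.ncard = Nat.card G.ConnectedComponent := by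
  rw [Set.ncard_sdiff_add_ncard_of_subset, ← Nat.card_coe_set_eq,
    Nat.card_range_of_injective (connectedComponent_out_injective G)]
  intro v hv
  exact ⟨G.connectedComponentMk v, (eq_of_reachable_of_vertexDegree_eq_zero hv
    (ConnectedComponent.exact (Quot.out_eq _).symm)).symm⟩

theorem ncard_branchNeighborhood_le [Fintype V] :
    (branchNeighborhood G).ncard ≤
      ∑ b, if 3 ≤ vertexDegree G b then vertexDegree G b + 1 else 0 := by
  rw [← Finset.sum_filter]
  refine (le_of_eq_of_le ?_ (Finset.set_ncard_biUnion_le _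
    fun b => insert b (G.neighborSet b))).trans
      (Finset.sum_le_sum fun b _ => Set.ncard_insert_le _ _)
  simp [branchNeighborhood]

theorem ncard_chainRoots_le [Finite V] (hleaf : ∀ v, vertexDegree G v ≠ 1) :
    (chainRoots G).ncard ≤ 8 * cyclomaticNumber G := by
  have := Fintype.ofFinite V
  have hiso : ∑ v, (if vertexDegree G v = 0 then 1 else 0) = {v | vertexDegree G v = 0}.ncard := by
    rw [← Finset.card_filter, ← Set.ncard_coe_finset]
    simp
  -- The constant `8` is dictated by degree three, where equality holds.
  have hvertex : ∑ v, ((if 3 ≤ vertexDegree G v then vertexDegree G v + 1 else 0) + 8) ≤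
      ∑ v, (4 * vertexDegree G v + 8 * if vertexDegree G v = 0 then 1 else 0) :=
    Finset.sum_le_sum fun v _ => by
      have := hleaf v
      split_ifs <;> omega
  simp only [Finset.sum_add_distrib, ← Finset.mul_sum, sum_vertexDegree, hiso, Finset.sum_const,
    Finset.card_univ, ← Nat.card_eq_fintype_card, smul_eq_mul] at hvertex
  have hunion := Set.ncard_union_le (Set.range (fun c : G.ConnectedComponent => c.out) \
    {v | vertexDegree G v = 0}) (branchNeighborhood G)
  have hbranch := ncard_branchNeighborhood_le (G := G)
  have hcomp := ncard_range_out_sdiff (G := G)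
  rw [← chainRoots] at hunion
  rw [cyclomaticNumber]
  omega

end Colouring

/-! ### Stripping leaves -/

section Leaves

variable {V : Type*} {G : SimpleGraph V} {v w : V}

theorem deleteIncidenceSet_sup_edge (hv : ∀ u, G.Adj v u ↔ u = w) :
    G.deleteIncidenceSet v ⊔ edge v w = G := by
  have := ((hv w).mpr rfl).ne
  ext u z
  have := hv u
  have := hv z
  grind [deleteIncidenceSet_adj, G.adj_comm]

theorem edgeCount_deleteIncidenceSet_leaf [Finite V] (hv : ∀ u, G.Adj v u ↔ u = w) :
    edgeCount G = edgeCount (G.deleteIncidenceSet v) + 1 := by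
  conv_lhs => rw [← deleteIncidenceSet_sup_edge hv]
  exact edgeCount_sup_edge ((hv w).mpr rfl).ne fun h => (deleteIncidenceSet_adj.mp h).2.1 rfl

theorem card_connectedComponent_deleteIncidenceSet_leaf_le [Finite V]
    (hv : ∀ u, G.Adj v u ↔ u = w) :
    Nat.card (G.deleteIncidenceSet v).ConnectedComponent ≤ Nat.card G.ConnectedComponent + 1 := by
  classical
  let merge : V → V := Function.update id v w
  have hmerge : ∀ u z, G.Adj u z → (G.deleteIncidenceSet v).Reachable (merge u) (merge z) := by
    intro u z huz
    by_cases hu : u = v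
    · have hz : z = w := (hv z).mp (hu ▸ huz)
      simp [merge, hu, hz, Function.update_apply]
    by_cases hz : z = v
    · have hu' : u = w := (hv u).mp (hz ▸ huz.symm)
      simp [merge, hz, hu', Function.update_apply]
    simpa [merge, hu, hz] using (deleteIncidenceSet_adj.mpr ⟨huz, hu, hz⟩).reachable
  let F : Option G.ConnectedComponent → (G.deleteIncidenceSet v).ConnectedComponent := fun c =>
    c.elim (connectedComponentMk _ v) fun c => connectedComponentMk _ (merge c.out)
  rw [← Finite.card_option]
  refine Nat.card_le_card_of_surjective F fun c => ?_
  induction c using ConnectedComponent.ind with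
  | h u =>
    by_cases hu : u = v
    · exact ⟨none, by rw [hu]; rfl⟩
    refine ⟨some (G.connectedComponentMk u), ConnectedComponent.sound ?_⟩
    have h := reachable_map hmerge
      (ConnectedComponent.exact (Quot.out_eq (G.connectedComponentMk u)))
    rwa [show merge u = u from Function.update_of_ne hu _ _] at h

theorem cyclomaticNumber_deleteIncidenceSet_leaf_le [Finite V] (hv : ∀ u, G.Adj v u ↔ u = w) :
    cyclomaticNumber (G.deleteIncidenceSet v) ≤ cyclomaticNumber G := by
  have := edgeCount_deleteIncidenceSet_leaf hv
  have := card_connectedComponent_deleteIncidenceSet_leaf_le hv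
  rw [cyclomaticNumber, cyclomaticNumber]
  omega

theorem IsPlanar.colorable_compl_joinGraph_of_leaf (hG : IsPlanar G) (hv : ∀ u, G.Adj v u ↔ u = w)
    {N : ℕ} (h : (joinGraph (G.deleteIncidenceSet v))ᶜ.Colorable N) :
    (joinGraph G)ᶜ.Colorable N := by
  classical
  refine h.of_hom ⟨Function.update id v w, fun {x y} hxy => ?_⟩
  rw [hG.compl_joinGraph_adj] at hxy
  rw [(hG.mono (G.deleteIncidenceSet_le v)).compl_joinGraph_adj]
  exact fun hxy' => hxy (IsPlanar.sup_edge_update_leaf (fun u => (hv u).mp) hxy')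

theorem IsPlanar.colorable_compl_joinGraph [Finite V] (hG : IsPlanar G) :
    (joinGraph G)ᶜ.Colorable (1 + 8 * cyclomaticNumber G) := by
  induction hk : edgeCount G using Nat.strong_induction_on generalizing G with
  | h k ih =>
    by_cases hleaf : ∀ v, vertexDegree G v ≠ 1
    · refine (hG.colorable_compl_joinGraph_of_chainGraph_reachable
        fun x => exists_mem_chainRoots_reachable hleaf).mono ?_
      have := ncard_chainRoots_le hleaf
      omega
    · push Not at hleaf
      obtain ⟨v, hv⟩ := hleaf
      obtain ⟨w, hw⟩ := vertexDegree_eq_one_iff.mp hv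
      have hlt := edgeCount_deleteIncidenceSet_leaf hw
      refine hG.colorable_compl_joinGraph_of_leaf hw
        ((ih _ (by omega) (hG.mono (G.deleteIncidenceSet_le v)) rfl).mono ?_)
      have := cyclomaticNumber_deleteIncidenceSet_leaf_le hw
      omega

end Leaves

/-! ### Counting addable edges -/

section Addable

variable {V : Type*} {G : SimpleGraph V}

theorem IsPlanar.card_connectedComponent_le_vertexDegree_joinGraph [Finite V]
    (hG : IsPlanar G) (x : V) :
    Nat.card G.ConnectedComponent ≤ vertexDegree (joinGraph G) x + 1 := by
  have hsub : (fun c : G.ConnectedComponent => c.out) '' {G.connectedComponentMk x}ᶜ ⊆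
      (joinGraph G).neighborSet x := by
    rintro _ ⟨c, hc, rfl⟩
    have hnr : ¬ G.Reachable x c.out := fun h =>
      hc ((ConnectedComponent.sound h.symm) ▸ (Quot.out_eq c).symm)
    exact ⟨fun h => hnr (h ▸ .refl _), hG.sup_edge_of_not_reachable hnr⟩
  have hle := Set.ncard_le_ncard hsub
  rw [Set.ncard_image_of_injective _ (connectedComponent_out_injective G)] at hle
  have := Set.ncard_add_ncard_compl {G.connectedComponentMk x}
  rw [Set.ncard_singleton] at this
  rw [vertexDegree]
  omega

variable [Fintype V]

theorem sq_card_le_of_colorable_compl {J : SimpleGraph V} {N : ℕ} (h : Jᶜ.Colorable N) :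
    Fintype.card V ^ 2 ≤ N * (Fintype.card V + 2 * edgeCount J) := by
  classical
  obtain ⟨C⟩ := h
  have hfiber : ∀ x, ({y | C y = C x} : Finset V).card ≤ vertexDegree J x + 1 := fun x => by
    rw [← Set.ncard_coe_finset]
    refine (Set.ncard_le_ncard (t := insert x (J.neighborSet x)) fun y hy => ?_).trans
      (Set.ncard_insert_le _ _)
    by_contra hyx
    simp only [Set.mem_insert_iff, mem_neighborSet, not_or] at hyx
    exact C.valid (v := y) (w := x) ⟨hyx.1, fun h => hyx.2 h.symm⟩ (by simpa using hy)
  calc Fintype.card V ^ 2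
      = (∑ i, ({y | C y = i} : Finset V).card) ^ 2 := by
        rw [← Finset.card_univ,
          Finset.card_eq_sum_card_fiberwise (f := C) (t := Finset.univ) (by simp)]
    _ ≤ N * ∑ i, ({y | C y = i} : Finset V).card ^ 2 := by
        simpa using sq_sum_le_card_mul_sum_sq (s := Finset.univ)
          (f := fun i => ({y | C y = i} : Finset V).card)
    _ = N * ∑ x, ({y | C y = C x} : Finset V).card := by
        rw [← Finset.sum_fiberwise (s := Finset.univ) (g := C)]
        congr 1
        refine Finset.sum_congr rfl fun i _ => ?_
        rw [sq, ← smul_eq_mul, ← Finset.sum_const]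
        exact Finset.sum_congr rfl fun x hx => by rw [(Finset.mem_filter.mp hx).2]
    _ ≤ N * (Fintype.card V + 2 * edgeCount J) := by
        rw [← sum_vertexDegree, add_comm, ← Finset.card_univ, Finset.card_eq_sum_ones,
          ← Finset.sum_add_distrib]
        exact Nat.mul_le_mul_left _ (Finset.sum_le_sum fun x _ => hfiber x)

theorem IsPlanar.card_mul_card_connectedComponent_le (hG : IsPlanar G) :
    Fintype.card V * Nat.card G.ConnectedComponent ≤
      2 * edgeCount (joinGraph G) + Fintype.card V := by
  have := Finset.sum_le_sum fun x (_ : x ∈ Finset.univ) =>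
    hG.card_connectedComponent_le_vertexDegree_joinGraph x
  simpa [Finset.sum_add_distrib, sum_vertexDegree] using this

theorem IsPlanar.mul_card_le_edgeCount_joinGraph (hG : IsPlanar G) (K : ℕ)
    (h : 8 * (2 * K + 1) * (2 * K + 1 + (edgeCount G - Fintype.card V)) ≤ Fintype.card V) :
    K * Fintype.card V ≤ edgeCount (joinGraph G) := by
  have hcyc : cyclomaticNumber G =
      edgeCount G + Nat.card G.ConnectedComponent - Fintype.card V := by
    rw [cyclomaticNumber, Nat.card_eq_fintype_card (α := V)]
  have hcomp := hG.card_mul_card_connectedComponent_le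
  have hcol := sq_card_le_of_colorable_compl hG.colorable_compl_joinGraph
  set n := Fintype.card V
  set κ := Nat.card G.ConnectedComponent
  set N := 1 + 8 * cyclomaticNumber G
  rcases Nat.lt_or_ge (2 * K) κ with hκ | hκ
  · have : n * (2 * K + 1) ≤ n * κ := Nat.mul_le_mul_left _ hκ
    linarith
  · have hN : (2 * K + 1) * N ≤ n :=
      calc (2 * K + 1) * N ≤ (2 * K + 1) * (8 * (2 * K + 1 + (edgeCount G - n))) :=
            Nat.mul_le_mul_left _ (by omega)
        _ ≤ n := by linarith
    have hn : 0 < n := lt_of_lt_of_le (by positivity) h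
    have hmul : n * ((2 * K + 1) * n) ≤ n * (n + 2 * edgeCount (joinGraph G)) :=
      calc n * ((2 * K + 1) * n) = (2 * K + 1) * n ^ 2 := by ring
        _ ≤ (2 * K + 1) * (N * (n + 2 * edgeCount (joinGraph G))) := Nat.mul_le_mul_left _ hcol
        _ = (2 * K + 1) * N * (n + 2 * edgeCount (joinGraph G)) := by ring
        _ ≤ n * (n + 2 * edgeCount (joinGraph G)) := Nat.mul_le_mul_right _ hN
    have := Nat.le_of_mul_le_mul_left hmul hn
    linarith

theorem IsPlanar.mul_card_le_ncard_addableSet (hG : IsPlanar G) (K : ℕ)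
    (h : 8 * (2 * K + 5) * (2 * K + 5 + (edgeCount G - Fintype.card V)) ≤ Fintype.card V) :
    K * Fintype.card V ≤ (addableSet G).ncard := by
  have hjoin := hG.mul_card_le_edgeCount_joinGraph (K + 2) h
  have hsplit := Set.ncard_le_ncard_sdiff_add_ncard (joinGraph G).edgeSet G.edgeSet
  rw [← addableSet_eq_sdiff, ← edgeCount, ← edgeCount] at hsplit
  have hfew : edgeCount G - Fintype.card V ≤ Fintype.card V :=
    (Nat.le_add_left _ _).trans ((Nat.le_mul_of_pos_left _ (by positivity)).trans h)
  have : (K + 2) * Fintype.card V = K * Fintype.card V + 2 * Fintype.card V := by ring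
  omega

end Addable

/-! ### Counting planar graphs -/

section Counting

variable {n : ℕ}

theorem edgeSet_sup_fromEdgeSet_sdiff {V : Type*} {G : SimpleGraph V} {e : Sym2 V}
    (he : e ∈ addableSet G) : (G ⊔ fromEdgeSet {e}).edgeSet \ G.edgeSet = {e} := by
  obtain ⟨hdiag, hmem, -⟩ := he
  ext e'
  simp only [edgeSet_sup, edgeSet_fromEdgeSet, Set.mem_sdiff, Set.mem_union, Set.mem_singleton_iff]
  constructor
  · tauto
  · rintro rfl
    exact ⟨.inr ⟨rfl, hdiag⟩, hmem⟩

theorem sup_fromEdgeSet_mem_planarSet {G : SimpleGraph (Fin n)} {t : ℕ} (hG : G ∈ planarSet n t)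
    {e : Sym2 (Fin n)} (he : e ∈ addableSet G) : G ⊔ fromEdgeSet {e} ∈ planarSet n (t + 1) := by
  refine ⟨he.2.2, ?_⟩
  have h := Set.ncard_sdiff_add_ncard_of_subset (edgeSet_mono (le_sup_left (a := G)
    (b := fromEdgeSet {e})))
  rw [edgeSet_sup_fromEdgeSet_sdiff he, Set.ncard_singleton, ← edgeCount, hG.2] at h
  rw [edgeCount, ← h, add_comm]

theorem ncard_planarSet_mul_le {t a : ℕ} (ha : ∀ G ∈ planarSet n t, a ≤ (addableSet G).ncard) :
    (planarSet n t).ncard * a ≤ (planarSet n (t + 1)).ncard * (t + 1) := by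
  classical
  rw [Set.ncard_eq_toFinset_card', Set.ncard_eq_toFinset_card']
  refine Finset.card_mul_le_card_mul
    (fun G G' => ∃ e ∈ addableSet G, G ⊔ fromEdgeSet {e} = G') (fun G hG => ?_) fun G' hG' => ?_
  · rw [Set.mem_toFinset] at hG
    have hinj : Set.InjOn (fun e => G ⊔ fromEdgeSet {e}) (addableSet G) :=
      fun e he e' he' (h : G ⊔ _ = G ⊔ _) => Set.singleton_injective <| by
        rw [← edgeSet_sup_fromEdgeSet_sdiff he, h, edgeSet_sup_fromEdgeSet_sdiff he']
    refine (ha G hG).trans ?_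
    rw [← hinj.ncard_image, ← Set.ncard_coe_finset]
    refine Set.ncard_le_ncard ?_ (Finset.finite_toSet _)
    rintro _ ⟨e, he, rfl⟩
    simpa using ⟨sup_fromEdgeSet_mem_planarSet hG he, e, he, rfl⟩
  · rw [Set.mem_toFinset] at hG'
    rw [← hG'.2, edgeCount, ← Set.ncard_coe_finset]
    refine (Set.ncard_le_ncard (t := (fun e => G' \ fromEdgeSet {e}) '' G'.edgeSet) ?_).trans
      Set.ncard_image_le
    intro G hG
    obtain ⟨-, e, he, rfl⟩ := (Finset.mem_bipartiteBelow _).mp hG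
    refine ⟨e, by simp [he.1], Disjoint.sup_sdiff_cancel_right ?_⟩
    simpa using he.2.1

theorem mul_ncard_planarSet_le_succ {K t : ℕ}
    (h : 8 * (4 * K + 5) * (4 * K + 5 + (t + 1 - n)) ≤ n) :
    K * (planarSet n t).ncard ≤ (planarSet n (t + 1)).ncard := by
  have hadd : ∀ G ∈ planarSet n t, 2 * K * n ≤ (addableSet G).ncard := fun G hG => by
    have := hG.1.mul_card_le_ncard_addableSet (2 * K)
    rw [Fintype.card_fin, hG.2] at this
    refine this (le_trans ?_ h)
    rw [show 2 * (2 * K) + 5 = 4 * K + 5 by ring]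
    gcongr
    omega
  have hn : 0 < n := lt_of_lt_of_le (by positivity) h
  have ht : t + 1 ≤ 2 * n := by
    have := (Nat.le_add_left _ _).trans ((Nat.le_mul_of_pos_left _ (by positivity)).trans h)
    omega
  refine Nat.le_of_mul_le_mul_left (c := 2 * n) ?_ (by omega)
  calc 2 * n * (K * (planarSet n t).ncard) = (planarSet n t).ncard * (2 * K * n) := by ring
    _ ≤ (planarSet n (t + 1)).ncard * (t + 1) := ncard_planarSet_mul_le hadd
    _ ≤ (planarSet n (t + 1)).ncard * (2 * n) := Nat.mul_le_mul_left _ ht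
    _ = 2 * n * (planarSet n (t + 1)).ncard := mul_comm _ _

theorem mul_ncard_planarSet_le_of_lt {K t m : ℕ}
    (h : 8 * (4 * K + 5) * (4 * K + 5 + (m - n)) ≤ n) (htm : t < m) :
    K * (planarSet n t).ncard ≤ (planarSet n m).ncard := by
  rcases K.eq_zero_or_pos with rfl | hK
  · simp
  induction m, htm using Nat.le_induction with
  | base => exact mul_ncard_planarSet_le_succ h
  | succ s _ ih =>
    have hs : 8 * (4 * K + 5) * (4 * K + 5 + (s - n)) ≤ n := le_trans (by gcongr; omega) h
    calc K * (planarSet n t).ncard ≤ (planarSet n s).ncard := ih hs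
      _ ≤ K * (planarSet n s).ncard := Nat.le_mul_of_pos_left _ hK
      _ ≤ (planarSet n (s + 1)).ncard := mul_ncard_planarSet_le_succ h

/-- The graphs of `𝒫(n,t)` in which every vertex of `S` is isolated. -/
def isolatedSet (S : Finset (Fin n)) (t : ℕ) : Set (SimpleGraph (Fin n)) :=
  {F ∈ planarSet n t | ∀ v ∈ S, ∀ u, ¬ F.Adj v u}

theorem sup_edge_mem_isolatedSet {S : Finset (Fin n)} {t : ℕ} {v u : Fin n} (hv : v ∉ S)
    (hu : u ∉ insert v S) {F : SimpleGraph (Fin n)} (hF : F ∈ isolatedSet (insert v S) t) :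
    F ⊔ edge v u ∈ isolatedSet S (t + 1) := by
  obtain ⟨⟨hplanar, hcount⟩, hiso⟩ := hF
  have hvF := hiso v (Finset.mem_insert_self v S)
  simp only [Finset.mem_insert, not_or] at hu
  refine ⟨⟨hplanar.sup_edge_of_not_reachable fun h => ?_, ?_⟩, fun a ha b hab => ?_⟩
  · exact hu.1 (eq_of_reachable_of_vertexDegree_eq_zero (vertexDegree_eq_zero_iff.mpr hvF) h).symm
  · rw [edgeCount_sup_edge (Ne.symm hu.1) (hvF u), hcount]
  · have := hiso a (Finset.mem_insert_of_mem ha) b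
    grind

theorem ncard_isolatedSet_insert_mul_le {S : Finset (Fin n)} {v : Fin n} (hv : v ∉ S) (t : ℕ) :
    (isolatedSet (insert v S) t).ncard * (n - (S.card + 1)) ≤
      (isolatedSet S (t + 1)).ncard := by
  have hcard : n - (S.card + 1) = (((insert v S : Finset (Fin n)) : Set (Fin n))ᶜ).ncard := by
    rw [← Finset.card_insert_of_notMem hv, Set.ncard_compl, Set.ncard_coe_finset, Nat.card_fin]
  rw [hcard, ← Set.ncard_prod]
  refine Set.ncard_le_ncard_of_injOn (fun p => p.1 ⊔ edge v p.2)
    (fun p hp => sup_edge_mem_isolatedSet hv hp.2 hp.1) ?_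
  rintro ⟨F, u⟩ ⟨hF, hu⟩ ⟨F', u'⟩ ⟨hF', hu'⟩ (heq : F ⊔ edge v u = F' ⊔ edge v u')
  have hvF := hF.2 v (Finset.mem_insert_self v S)
  have hvF' := hF'.2 v (Finset.mem_insert_self v S)
  have hadj : ∀ a b, (F ⊔ edge v u).Adj a b ↔ (F' ⊔ edge v u').Adj a b := fun a b => by rw [heq]
  have huv : v ≠ u := fun h => hu (by simp [h])
  refine Prod.ext ?_ ?_
  · ext a b
    have := hadj a b
    have := hvF a
    have := hvF b
    have := hvF' a
    have := hvF' b
    grind [F.adj_comm, F'.adj_comm]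
  · have := hadj v u
    have := hvF' u
    grind

theorem ncard_isolatedSet_mul_pow_le {q : ℕ} {S : Finset (Fin n)} (hq : q + S.card ≤ n) (t : ℕ) :
    (isolatedSet S t).ncard * q ^ S.card ≤ (planarSet n (t + S.card)).ncard := by
  induction S using Finset.induction_on generalizing t with
  | empty => simp [isolatedSet]
  | @insert v S hv ih =>
    rw [Finset.card_insert_of_notMem hv] at hq ⊢
    calc (isolatedSet (insert v S) t).ncard * q ^ (S.card + 1)
        = (isolatedSet (insert v S) t).ncard * q * q ^ S.card := by ring
      _ ≤ (isolatedSet (insert v S) t).ncard * (n - (S.card + 1)) * q ^ S.card := by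
          gcongr
          omega
      _ ≤ (isolatedSet S (t + 1)).ncard * q ^ S.card :=
          Nat.mul_le_mul_right _ (ncard_isolatedSet_insert_mul_le hv t)
      _ ≤ (planarSet n (t + 1 + S.card)).ncard := ih (by omega) (t + 1)
      _ = (planarSet n (t + (S.card + 1))).ncard := by rw [add_right_comm, ← add_assoc]

end Counting

/-! ### Graphs with a prescribed component -/

section Component

variable {α V : Type*} {n m : ℕ}

theorem IsComponent.exists_map_le {H : SimpleGraph α} {G : SimpleGraph V} {W : Finset V}
    (hW : IsComponent G W) (f : H ≃g G.induce (W : Set V)) :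
    ∃ φ : α ↪ V, H.map φ ≤ G ∧ ∀ i u, G.Adj (φ i) u → (H.map φ).Adj (φ i) u := by
  refine ⟨f.toEquiv.toEmbedding.trans (Function.Embedding.subtype _), ?_, fun i u hiu => ?_⟩
  · rintro _ _ ⟨-, i, j, hij, rfl, rfl⟩
    exact f.map_adj_iff.mpr hij
  · obtain ⟨j, hj⟩ := f.surjective ⟨u, hW.2 _ (f i).2 u hiu⟩
    obtain rfl : (f j : V) = u := congrArg Subtype.val hj
    exact ⟨hiu.ne, i, j, f.map_adj_iff.mp hiu, rfl, rfl⟩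

/-- The graphs of `𝒫(n,m)` with a component isomorphic to `H`. -/
def componentSet (H : SimpleGraph α) (n m : ℕ) : Set (SimpleGraph (Fin n)) :=
  {G ∈ planarSet n m | ∃ W : Finset (Fin n),
    IsComponent G W ∧ Nonempty (H ≃g G.induce (W : Set (Fin n)))}

theorem edgeCount_le_of_mem_componentSet {H : SimpleGraph α} {G : SimpleGraph (Fin n)}
    (hG : G ∈ componentSet H n m) : edgeCount H ≤ m := by
  obtain ⟨⟨-, rfl⟩, W, hW, ⟨f⟩⟩ := hG
  obtain ⟨φ, hle, -⟩ := hW.exists_map_le f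
  exact edgeCount_map H φ ▸ edgeCount_le_of_le hle

theorem componentSet_subset_iUnion [Fintype α] (H : SimpleGraph α) (n m : ℕ) :
    componentSet H n m ⊆ ⋃ φ : α ↪ Fin n,
      (· ⊔ H.map φ) '' isolatedSet (Finset.univ.map φ) (m - edgeCount H) := by
  rintro G ⟨⟨hG, rfl⟩, W, hW, ⟨f⟩⟩
  obtain ⟨φ, hle, hclosed⟩ := hW.exists_map_le f
  refine Set.mem_iUnion.mpr ⟨φ, G \ H.map φ, ⟨⟨hG.mono sdiff_le, ?_⟩, ?_⟩, sdiff_sup_cancel hle⟩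
  · rw [edgeCount_sdiff_of_le hle, edgeCount_map]
  · simp only [Finset.mem_map, Finset.mem_univ, true_and, sdiff_adj]
    rintro _ ⟨i, rfl⟩ u ⟨hadj, hnot⟩
    exact hnot (hclosed i u hadj)

theorem ncard_componentSet_mul_pow_le [Fintype α] (H : SimpleGraph α) (n m : ℕ) :
    (componentSet H n m).ncard * (n - Fintype.card α) ^ Fintype.card α ≤
      n ^ Fintype.card α * (planarSet n (m - edgeCount H + Fintype.card α)).ncard := by
  set h := Fintype.card α
  set t := m - edgeCount H
  have hterm : ∀ φ : α ↪ Fin n, ((· ⊔ H.map φ) '' isolatedSet (Finset.univ.map φ) t).ncard *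
      (n - h) ^ h ≤ (planarSet n (t + h)).ncard := fun φ => by
    have hS : (Finset.univ.map φ).card = h := Finset.card_map φ
    have hn : h ≤ n := by simpa using Fintype.card_le_of_embedding φ
    have hcount := ncard_isolatedSet_mul_pow_le (q := n - h) (S := Finset.univ.map φ)
      (by omega) t
    rw [hS] at hcount
    exact (Nat.mul_le_mul_right _ Set.ncard_image_le).trans hcount
  have hemb : Fintype.card (α ↪ Fin n) ≤ n ^ h := by
    rw [Fintype.card_embedding_eq, Fintype.card_fin]
    exact Nat.descFactorial_le_pow n h
  calc (componentSet H n m).ncard * (n - h) ^ h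
      ≤ (∑ φ : α ↪ Fin n, ((· ⊔ H.map φ) '' isolatedSet (Finset.univ.map φ) t).ncard) *
          (n - h) ^ h := by
        gcongr
        exact (Set.ncard_le_ncard (componentSet_subset_iUnion H n m)).trans
          (Set.ncard_iUnion_le_of_fintype _)
    _ ≤ ∑ _φ : α ↪ Fin n, (planarSet n (t + h)).ncard := by
        rw [Finset.sum_mul]
        exact Finset.sum_le_sum fun φ _ => hterm φ
    _ ≤ n ^ h * (planarSet n (t + h)).ncard := by
        rw [Finset.sum_const, Finset.card_univ, smul_eq_mul]
        exact Nat.mul_le_mul_right _ hemb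

theorem ncard_componentSet_le [Fintype α] (H : SimpleGraph α) (hn : 2 * Fintype.card α < n) :
    (componentSet H n m).ncard ≤
      2 ^ Fintype.card α * (planarSet n (m - edgeCount H + Fintype.card α)).ncard := by
  have hpos : 0 < (n - Fintype.card α) ^ Fintype.card α := Nat.pow_pos (by omega)
  refine Nat.le_of_mul_le_mul_right ((ncard_componentSet_mul_pow_le H n m).trans ?_) hpos
  rw [mul_right_comm, ← mul_pow]
  gcongr
  omega

theorem mul_ncard_componentSet_le [Fintype α] {H : SimpleGraph α}
    (hH : Fintype.card α < edgeCount H) (hn : 2 * Fintype.card α < n) {K : ℕ}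
    (hm : 8 * (4 * K + 5) * (4 * K + 5 + (m - n)) ≤ n) :
    K * (componentSet H n m).ncard ≤ 2 ^ Fintype.card α * (planarSet n m).ncard := by
  rcases (componentSet H n m).eq_empty_or_nonempty with hempty | ⟨G, hG⟩
  · simp [hempty]
  have hlt : m - edgeCount H + Fintype.card α < m := by
    have := edgeCount_le_of_mem_componentSet hG
    omega
  calc K * (componentSet H n m).ncard
      ≤ K * (2 ^ Fintype.card α *
          (planarSet n (m - edgeCount H + Fintype.card α)).ncard) :=
        Nat.mul_le_mul_left _ (ncard_componentSet_le H hn)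
    _ = 2 ^ Fintype.card α *
          (K * (planarSet n (m - edgeCount H + Fintype.card α)).ncard) := by ring
    _ ≤ 2 ^ Fintype.card α * (planarSet n m).ncard :=
        Nat.mul_le_mul_left _ (mul_ncard_planarSet_le_of_lt hm hlt)

end Component

/-! ### Asymptotics -/

theorem tendsto_div_zero_of_eventually_mul_le {ι : Type*} {l : Filter ι} {a b : ι → ℕ} {C : ℕ}
    (h : ∀ K, ∀ᶠ i in l, K * a i ≤ C * b i) :
    Tendsto (fun i => (a i : ℝ) / b i) l (nhds 0) := by
  refine tendsto_order.2 ⟨fun δ hδ => .of_forall fun i => hδ.trans_le (by positivity),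
    fun δ hδ => ?_⟩
  obtain ⟨K, hK⟩ := exists_nat_gt (C / δ)
  filter_upwards [h K] with i hi
  rcases (b i).eq_zero_or_pos with hb | hb
  · simpa [hb] using hδ
  have hb' : (0 : ℝ) < b i := Nat.cast_pos.mpr hb
  have hi' : (K * a i : ℝ) ≤ C * b i := by exact_mod_cast hi
  rw [div_lt_iff₀ hδ] at hK
  rw [div_lt_iff₀ hb']
  refine lt_of_mul_lt_mul_left (hi'.trans_lt ?_) K.cast_nonneg
  calc (C * b i : ℝ) < K * δ * b i := by gcongr
    _ = K * (δ * b i) := mul_assoc ..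

theorem eventually_mul_add_sub_le {m : ℕ → ℕ}
    (hmu : ∀ ε : ℝ, 0 < ε → ∀ᶠ n : ℕ in atTop, (m n : ℝ) ≤ (1 + ε) * n) (a b : ℕ) :
    ∀ᶠ n in atTop, a * (b + (m n - n)) ≤ n := by
  filter_upwards [hmu (1 / (2 * a + 1)) (by positivity), eventually_ge_atTop (2 * (a * b))]
    with n hmn hn
  have hexcess : (2 * a + 1) * m n ≤ (2 * a + 1) * n + n := by
    have : ((2 * a + 1) * m n : ℝ) ≤ (2 * a + 1) * n + n :=
      calc ((2 * a + 1) * m n : ℝ) ≤ (2 * a + 1) * ((1 + 1 / (2 * a + 1)) * n) := by gcongr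
        _ = (2 * a + 1) * n + n := by field_simp
    exact_mod_cast this
  rcases Nat.le_total (m n) n with h | h
  · rw [Nat.sub_eq_zero_of_le h]
    linarith
  · obtain ⟨d, hd⟩ := Nat.exists_eq_add_of_le h
    rw [hd, Nat.add_sub_cancel_left]
    rw [hd] at hexcess
    linarith

theorem multicyclic_component_whp_zero (h : ℕ) (H : SimpleGraph (Fin h))
    (hconn : H.Connected) (hplanar : IsPlanar H) (hmulti : h < edgeCount H) (m : ℕ → ℕ)
    (hmu : ∀ ε : ℝ, 0 < ε → ∀ᶠ n : ℕ in atTop, (m n : ℝ) ≤ (1 + ε) * n)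
    (hne : ∀ᶠ n : ℕ in atTop, (planarSet n (m n)).Nonempty) :
    Tendsto (fun n : ℕ =>
        planarProb n (m n) fun G => ∃ W : Finset (Fin n),
          IsComponent G W ∧ Nonempty (H ≃g G.induce (W : Set (Fin n))))
      atTop (nhds 0) := by
  refine tendsto_div_zero_of_eventually_mul_le (a := fun n => (componentSet H n (m n)).ncard)
    (C := 2 ^ h) fun K => ?_
  filter_upwards [eventually_gt_atTop (2 * h),
    eventually_mul_add_sub_le hmu (8 * (4 * K + 5)) (4 * K + 5)] with n hn hmn
  simpa using mul_ncard_componentSet_le (H := H) (by simpa using hmulti) (by simpa using hn) hmn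
end

section
/- Let k be a fixed positive integer. Then for every function m:ℕ→ℕ with 𝒫(n,m(n)) nonempty for all large n, limsup_{n→∞} of the probability that P_{n,m(n)} contains a non-acyclic component of order at most k (i.e. a component C with |C| ≤ k that contains a cycle) is strictly less than 1. -/
/-!
The proof is a switching argument. Call an oriented edge `(w, x)` of `G` *cyclic* if `wx` is not a
bridge and its component has at most `k` vertices; a graph has a component of order at most `k` with
a cycle only if it has a cyclic pair. Given a cyclic pair `(w, x)` and a vertex `v` outside the
component of `w`, replace `wx` by `wv`. The new graph has equally many edges, and it is planar
because `K₅` and `K₃,₃` are 2-connected, so that an edge joining two components cannot help to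
create such a minor. Every cyclic pair of the new graph was already cyclic in `G`, and `(w, x)` is
lost.

A graph on `n` vertices with `Y` cyclic pairs admits at least `Y (n - k)` switchings. To undo a
switching it suffices to know the oriented bridge `(w, v)`, at most `2n` choices since bridges form
a forest, and the vertex `x`, one of at most `k` vertices on the side of `w`. For `n ≥ 2k` this
gives `∑_{G ∈ S} Y(G) ≤ 4k |T|` whenever switchings map the family `S` into `T`. Taking for both `S`
and `T` all of `𝒫(n,m)`, the mean of `Y` is at most `4k`, hence `Y ≤ 8k` for at least half of the
graphs. Taking `S = {Y = i + 1}` and `T = {Y ≤ i}` gives `|{Y ≤ i + 1}| ≤ (1 + 4k) |{Y ≤ i}|`. So at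
least a proportion `1 / (2 (1 + 4k) ^ (8k))` of the graphs has `Y = 0`, uniformly in `m` and in
`n ≥ 2k`.
-/

open SimpleGraph Filter Asymptotics

/-! ### Adding an edge between two components preserves planarity -/

section Crossing

variable {β : Type*} {G : SimpleGraph β} {B S : Set β} {u v : β}

/-- `uv` is the only edge of `G` that may join `B` to its complement, with `u` on the side of `B`;
it need not be an edge of `G`. -/
def CrossesOnlyAt (G : SimpleGraph β) (B : Set β) (u v : β) : Prop :=
  ∀ ⦃x y : β⦄, x ∈ B → y ∉ B → G.Adj x y → x = u ∧ y = v

theorem CrossesOnlyAt.compl (hB : CrossesOnlyAt G B u v) : CrossesOnlyAt G Bᶜ v u :=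
  fun _ _ hx hy hxy => (hB (not_not.1 hy) hx hxy.symm).symm

theorem crossesOnlyAt_sup_edge (huv : ¬ G.Reachable u v) :
    CrossesOnlyAt (G ⊔ edge u v) {x | G.Reachable u x} u v := by
  rintro x y hx hy (hxy | hxy)
  · exact absurd (hx.trans hxy.reachable) hy
  · rcases ((edge_adj ..).1 hxy).1 with h | ⟨rfl, -⟩
    · exact h
    · exact absurd hx huv

theorem exists_adj_of_connected_induce_s12 (hS : (G.induce S).Connected) {T : Set β} {x y : β}
    (hxS : x ∈ S) (hxT : x ∈ T) (hyS : y ∈ S) (hyT : y ∉ T) :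
    ∃ a ∈ S, ∃ b ∈ S, a ∈ T ∧ b ∉ T ∧ G.Adj a b := by
  obtain ⟨p⟩ := hS.preconnected ⟨x, hxS⟩ ⟨y, hyS⟩
  obtain ⟨d, -, ha, hb⟩ := p.exists_boundary_dart (Subtype.val ⁻¹' T) hxT hyT
  exact ⟨d.fst, d.fst.2, d.snd, d.snd.2, ha, hb, d.adj⟩

theorem CrossesOnlyAt.mem_of_connected (hB : CrossesOnlyAt G B u v)
    (hS : (G.induce S).Connected) (hin : (S ∩ B).Nonempty) (hout : ¬ S ⊆ B) :
    u ∈ S ∧ v ∈ S := by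
  obtain ⟨x, hxS, hxB⟩ := hin
  obtain ⟨y, hyS, hyB⟩ := Set.not_subset.1 hout
  obtain ⟨a, haS, b, hbS, haB, hbB, hab⟩ := exists_adj_of_connected_induce_s12 hS hxS hxB hyS hyB
  obtain ⟨rfl, rfl⟩ := hB haB hbB hab
  exact ⟨haS, hbS⟩

/-- Of two distinct components of `G[S ∩ B]` one misses `u`, hence has no edge to the rest
of `S`. -/
theorem CrossesOnlyAt.connected_induce_inter (hB : CrossesOnlyAt G B u v)
    (hS : (G.induce S).Connected) (hne : (S ∩ B).Nonempty) :
    (G.induce (S ∩ B)).Connected := by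
  have reachable_of_avoids (x y : ↥(S ∩ B))
      (hu : ∀ h : u ∈ S ∩ B, ¬ (G.induce (S ∩ B)).Reachable x ⟨u, h⟩) :
      (G.induce (S ∩ B)).Reachable x y := by
    by_contra hxy
    obtain ⟨a, -, b, hbS, ⟨ha, hxa⟩, hb, hab⟩ := exists_adj_of_connected_induce_s12 hS
      (T := {z | ∃ h : z ∈ S ∩ B, (G.induce (S ∩ B)).Reachable x ⟨z, h⟩})
      x.2.1 ⟨x.2, .rfl⟩ y.2.1 (fun ⟨_, h⟩ => hxy h)
    have hbB : b ∈ B := by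
      by_contra hbB
      obtain ⟨rfl, -⟩ := hB ha.2 hbB hab
      exact hu ha hxa
    refine hb ⟨⟨hbS, hbB⟩, hxa.trans (Adj.reachable ?_)⟩
    exact hab
  have := hne.to_subtype
  refine ⟨fun x y => ?_⟩
  by_cases hu : ∀ h : u ∈ S ∩ B, ¬ (G.induce (S ∩ B)).Reachable x ⟨u, h⟩
  · exact reachable_of_avoids x y hu
  · push Not at hu
    obtain ⟨hu, hxu⟩ := hu
    by_contra hxy
    exact hxy (reachable_of_avoids y x fun _ hyu => hxy (hxu.trans hyu.symm)).symm

end Crossing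

section TwoConnected

variable {α β : Type*} {K : SimpleGraph α}

/-- 2-connectedness: at least three vertices, and no vertex whose deletion disconnects the graph. -/
structure IsTwoConnected (K : SimpleGraph α) : Prop where
  three_le_card : 3 ≤ ENat.card α
  connected_induce_compl (a : α) : (K.induce {a}ᶜ).Connected

theorem IsTwoConnected.exists_adj_ne (hK : IsTwoConnected K) {a b : α} (hab : a ≠ b) :
    ∃ c, c ≠ b ∧ K.Adj a c := by
  obtain ⟨d, hda, hdb⟩ := ENat.exists_ne_ne_of_three_le hK.three_le_card a b
  have : Nontrivial ({b}ᶜ : Set α) :=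
    ⟨⟨a, hab⟩, ⟨d, hdb⟩, fun h => hda (congrArg Subtype.val h).symm⟩
  obtain ⟨c, hc⟩ := (hK.connected_induce_compl b).preconnected.exists_adj_of_nontrivial ⟨a, hab⟩
  exact ⟨c, c.2, hc⟩

theorem isTwoConnected_completeGraph (h : 3 ≤ ENat.card α) :
    IsTwoConnected (completeGraph α) where
  three_le_card := h
  connected_induce_compl a := by
    have : Nontrivial α :=
      (ENat.one_lt_card_iff_nontrivial α).1 (lt_of_lt_of_le (by norm_num) h)
    obtain ⟨b, hb⟩ := exists_ne a
    have : Nonempty ({a}ᶜ : Set α) := ⟨⟨b, hb⟩⟩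
    rw [induce_top]
    exact connected_top

theorem isTwoConnected_completeBipartiteGraph [Nontrivial α] [Nontrivial β] :
    IsTwoConnected (completeBipartiteGraph α β) where
  three_le_card := by
    rw [ENat.card_sum]
    calc (3 : ℕ∞) ≤ 2 + 2 := by norm_num
      _ ≤ ENat.card α + ENat.card β := add_le_add
        (Order.add_one_le_of_lt ENat.one_lt_card) (Order.add_one_le_of_lt ENat.one_lt_card)
  connected_induce_compl a := by
    obtain ⟨l, hl⟩ : ∃ l : α, .inl l ≠ a := by
      rcases a with i | i
      · obtain ⟨j, hj⟩ := exists_ne i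
        exact ⟨j, by simpa using hj⟩
      · exact ⟨Classical.arbitrary α, by simp⟩
    obtain ⟨r, hr⟩ : ∃ r : β, .inr r ≠ a := by
      rcases a with i | i
      · exact ⟨Classical.arbitrary β, by simp⟩
      · obtain ⟨j, hj⟩ := exists_ne i
        exact ⟨j, by simpa using hj⟩
    refine (connected_iff_exists_forall_reachable _).2 ⟨⟨.inl l, hl⟩, ?_⟩
    have adj_right (j : β) (hj : .inr j ≠ a) :
        ((completeBipartiteGraph α β).induce {a}ᶜ).Adj ⟨.inl l, hl⟩ ⟨.inr j, hj⟩ := by simp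
    rintro ⟨i | j, hi⟩
    · refine (adj_right r hr).reachable.trans (Adj.reachable ?_)
      simp
    · exact (adj_right j hi).reachable

end TwoConnected

section MinorModel

variable {α β : Type*} {K : SimpleGraph α} {G H : SimpleGraph β} {f : α → Set β} {B : Set β}
  {u v : β} {a₀ : α}

/-- `f` assigns to the vertices of `K` the branch sets of a `K`-minor of `G`. -/
structure IsMinorModel_s12 (K : SimpleGraph α) (G : SimpleGraph β) (f : α → Set β) : Prop where
  connected (a : α) : (G.induce (f a)).Connected
  disjoint (a b : α) : a ≠ b → Disjoint (f a) (f b)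
  exists_adj (a b : α) : K.Adj a b → ∃ x ∈ f a, ∃ y ∈ f b, G.Adj x y

theorem isMinor_iff_exists_isMinorModel_s12 : IsMinor K G ↔ ∃ f, IsMinorModel_s12 K G f :=
  ⟨fun ⟨f, h₁, h₂, h₃⟩ => ⟨f, h₁, h₂, h₃⟩, fun ⟨f, hf⟩ => ⟨f, hf.1, hf.2, hf.3⟩⟩

theorem IsMinorModel_s12.mono_of_adj (hf : IsMinorModel_s12 K G f)
    (h : ∀ a b, ∀ x ∈ f a, ∀ y ∈ f b, G.Adj x y → H.Adj x y) : IsMinorModel_s12 K H f where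
  connected a := (hf.connected a).mono fun x y hxy => h a a x x.2 y y.2 hxy
  disjoint := hf.disjoint
  exists_adj a b hab :=
    let ⟨x, hx, y, hy, hxy⟩ := hf.exists_adj a b hab
    ⟨x, hx, y, hy, h a b x hx y hy hxy⟩

theorem IsMinor.mono (hGH : G ≤ H) (h : IsMinor K G) : IsMinor K H :=
  let ⟨f, hf⟩ := isMinor_iff_exists_isMinorModel_s12.1 h
  isMinor_iff_exists_isMinorModel_s12.2 ⟨f, hf.mono_of_adj fun _ _ _ _ _ _ hxy => hGH hxy⟩

theorem IsMinorModel_s12.nonempty (hf : IsMinorModel_s12 K G f) (a : α) : (f a).Nonempty :=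
  Set.nonempty_coe_sort.1 (hf.connected a).nonempty

theorem IsMinorModel_s12.eq_of_mem (hf : IsMinorModel_s12 K G f) {a b : α} {x : β} (ha : x ∈ f a)
    (hb : x ∈ f b) : a = b := by
  by_contra hab
  exact Set.disjoint_left.1 (hf.disjoint a b hab) ha hb

/-- If the edge realising `a₀b` crossed, the branch set of `a₀` would lie outside `B`, and its edge
to another neighbouring branch set would be a second crossing edge. -/
theorem IsMinorModel_s12.exists_adj_inter (hf : IsMinorModel_s12 K G f) (hK : IsTwoConnected K)
    (hB : CrossesOnlyAt G B u v) (hfB : ∀ a ≠ a₀, f a ⊆ B) {b : α} (hab : K.Adj a₀ b) :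
    ∃ x ∈ f a₀ ∩ B, ∃ y ∈ f b ∩ B, G.Adj x y := by
  obtain ⟨x, hx, y, hy, hxy⟩ := hf.exists_adj a₀ b hab
  have hyB := hfB b hab.ne' hy
  refine ⟨x, ⟨hx, ?_⟩, y, ⟨hy, hyB⟩, hxy⟩
  by_contra hxB
  obtain ⟨rfl, rfl⟩ := hB hyB hxB hxy.symm
  have hout : ∀ z ∈ f a₀, z ∉ B := fun z hz hzB =>
    hab.ne (hf.eq_of_mem (hB.mem_of_connected (hf.connected a₀) ⟨z, hz, hzB⟩
      fun h => hxB (h hx)).1 hy)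
  obtain ⟨c, hcb, hac⟩ := hK.exists_adj_ne hab.ne
  obtain ⟨x', hx', y', hy', hxy'⟩ := hf.exists_adj a₀ c hac
  obtain ⟨rfl, -⟩ := hB (hfB c hac.ne' hy') (hout x' hx') hxy'.symm
  exact hcb (hf.eq_of_mem hy' hy)

theorem IsMinorModel_s12.inter (hf : IsMinorModel_s12 K G f) (hK : IsTwoConnected K)
    (hB : CrossesOnlyAt G B u v) (hfB : ∀ a ≠ a₀, f a ⊆ B) :
    IsMinorModel_s12 K G fun a => f a ∩ B where
  connected a := by
    refine hB.connected_induce_inter (hf.connected a) ?_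
    by_cases ha : a = a₀
    · subst ha
      obtain ⟨b, hb⟩ := (hK.connected_induce_compl a).nonempty
      obtain ⟨c, -, hac⟩ := hK.exists_adj_ne (Ne.symm hb)
      obtain ⟨x, hx, -⟩ := hf.exists_adj_inter hK hB hfB hac
      exact ⟨x, hx⟩
    · rw [Set.inter_eq_left.2 (hfB a ha)]
      exact hf.nonempty a
  disjoint a b hab := (hf.disjoint a b hab).mono Set.inter_subset_left Set.inter_subset_left
  exists_adj a b hab := by
    by_cases ha : a = a₀
    · subst ha
      exact hf.exists_adj_inter hK hB hfB hab
    by_cases hb : b = a₀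
    · subst hb
      obtain ⟨y, hy, x, hx, hyx⟩ := hf.exists_adj_inter hK hB hfB hab.symm
      exact ⟨x, hx, y, hy, hyx.symm⟩
    obtain ⟨x, hx, y, hy, hxy⟩ := hf.exists_adj a b hab
    exact ⟨x, ⟨hx, hfB a ha hx⟩, y, ⟨hy, hfB b hb hy⟩, hxy⟩

theorem IsMinorModel_s12.forall_subset_or_forall_subset_compl (hf : IsMinorModel_s12 K G f)
    (hK : IsTwoConnected K) (hB : CrossesOnlyAt G B u v) (hu : ∀ a ≠ a₀, u ∉ f a) :
    (∀ a ≠ a₀, f a ⊆ B) ∨ ∀ a ≠ a₀, f a ⊆ Bᶜ := by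
  have subset_of_inter_nonempty (a) (ha : a ≠ a₀) (h : (f a ∩ B).Nonempty) : f a ⊆ B := by
    by_contra hout
    exact hu a ha (hB.mem_of_connected (hf.connected a) h hout).1
  by_contra! h
  obtain ⟨⟨b, hb, hbB⟩, a, ha, haB⟩ := h
  have haB : f a ⊆ B := subset_of_inter_nonempty a ha
    (by rwa [Set.subset_compl_iff_disjoint_right, Set.not_disjoint_iff_nonempty_inter] at haB)
  obtain ⟨c, hc, d, hd, hcB, hdB, hcd⟩ := exists_adj_of_connected_induce_s12
    (hK.connected_induce_compl a₀) (T := {c | f c ⊆ B}) ha haB hb hbB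
  obtain ⟨x, hx, y, hy, hxy⟩ := hf.exists_adj c d hcd
  have hyB : y ∉ B := fun hyB => hdB (subset_of_inter_nonempty d hd ⟨y, hy, hyB⟩)
  obtain ⟨rfl, -⟩ := hB (hcB hx) hyB hxy
  exact hu c hc hx

/-- All branch sets but the one containing `u` lie on the same side of the new edge, and
intersecting all of them with that side gives a minor of `G`. -/
theorem IsMinor.of_sup_edge (hK : IsTwoConnected K) (huv : ¬ G.Reachable u v)
    (h : IsMinor K (G ⊔ edge u v)) : IsMinor K G := by
  obtain ⟨f, hf⟩ := isMinor_iff_exists_isMinorModel_s12.1 h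
  set A : Set β := {x | G.Reachable u x}
  have hA : CrossesOnlyAt (G ⊔ edge u v) A u v := crossesOnlyAt_sup_edge huv
  have adj_of_iff {x y} (hxy : (G ⊔ edge u v).Adj x y) (hside : x ∈ A ↔ y ∈ A) : G.Adj x y := by
    refine hxy.resolve_right fun he => huv ?_
    rcases ((edge_adj ..).1 he).1 with ⟨rfl, rfl⟩ | ⟨rfl, rfl⟩
    · exact hside.1 .rfl
    · exact hside.2 .rfl
  obtain ⟨a₀, ha₀⟩ : ∃ a₀, ∀ a ≠ a₀, u ∉ f a := by
    by_cases h : ∃ a, u ∈ f a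
    · obtain ⟨a, ha⟩ := h
      exact ⟨a, fun b hb hub => hb (hf.eq_of_mem hub ha)⟩
    · have : Nonempty α :=
        (ENat.one_le_card_iff_nonempty α).1 (le_trans (by norm_num) hK.three_le_card)
      exact ⟨Classical.arbitrary α, fun a _ hua => h ⟨a, hua⟩⟩
  rw [isMinor_iff_exists_isMinorModel_s12]
  rcases hf.forall_subset_or_forall_subset_compl hK hA ha₀ with hin | hout
  · exact ⟨_, (hf.inter hK hA hin).mono_of_adj fun _ _ _ hx _ hy hxy =>
      adj_of_iff hxy (iff_of_true hx.2 hy.2)⟩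
  · exact ⟨_, (hf.inter hK hA.compl hout).mono_of_adj fun _ _ _ hx _ hy hxy =>
      adj_of_iff hxy (iff_of_false hx.2 hy.2)⟩

end MinorModel

section Planar

variable {V : Type*} {G H : SimpleGraph V}

theorem IsPlanar.anti (hGH : G ≤ H) (hH : IsPlanar H) : IsPlanar G :=
  ⟨fun h => hH.1 (h.mono hGH), fun h => hH.2 (h.mono hGH)⟩

theorem IsPlanar.sup_edge {u v : V} (hG : IsPlanar G) (huv : ¬ G.Reachable u v) :
    IsPlanar (G ⊔ edge u v) :=
  ⟨fun h => hG.1 (h.of_sup_edge (isTwoConnected_completeGraph (by norm_num)) huv),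
    fun h => hG.2 (h.of_sup_edge isTwoConnected_completeBipartiteGraph huv)⟩

end Planar

/-! ### Switchings -/

section CyclicPairs

variable {V : Type*} {k : ℕ} {G H : SimpleGraph V} {w x : V}

/-- The number of vertices of the component of `v` in `G`. -/
noncomputable def componentOrder (G : SimpleGraph V) (v : V) : ℕ :=
  (G.connectedComponentMk v).supp.ncard

theorem componentOrder_mono [Finite V] {v : V} (h : ∀ y, G.Reachable y v → H.Reachable y v) :
    componentOrder G v ≤ componentOrder H v :=
  Set.ncard_le_ncard fun y hy =>
    ConnectedComponent.sound (h y (ConnectedComponent.exact hy))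

theorem reachable_deleteEdges_of_not_isBridge (hb : ¬ G.IsBridge s(w, x)) {a b : V}
    (h : G.Reachable a b) : (G.deleteEdges {s(w, x)}).Reachable a b := by
  rw [isBridge_iff, not_not] at hb
  rw [reachable_iff_reflTransGen] at h
  induction h with
  | refl => exact .rfl
  | @tail b c _ hbc ih =>
    refine ih.trans ?_
    by_cases hc : s(b, c) = s(w, x)
    · rcases Sym2.eq_iff.1 hc with ⟨rfl, rfl⟩ | ⟨rfl, rfl⟩
      · exact hb
      · exact hb.symm
    · exact Adj.reachable (deleteEdges_adj.2 ⟨hbc, hc⟩)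

theorem IsComponent.mem_of_reachable {W : Finset V} (hW : IsComponent G W) {v y : V} (hv : v ∈ W)
    (h : G.Reachable v y) : y ∈ W := by
  rw [reachable_iff_reflTransGen] at h
  induction h with
  | refl => exact hv
  | tail _ hadj ih => exact hW.2 _ ih _ hadj

theorem IsComponent.componentOrder_le_card {W : Finset V} (hW : IsComponent G W) {v : V}
    (hv : v ∈ W) : componentOrder G v ≤ W.card := by
  rw [← Set.ncard_coe_finset]
  exact Set.ncard_le_ncard fun y hy =>
    hW.mem_of_reachable hv (ConnectedComponent.exact hy).symm

variable [Fintype V]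

open scoped Classical in
/-- The *cyclic pairs* of `G`: the oriented edges that lie on a cycle, in components of order at
most `k`. Lying on a cycle is expressed as not being a bridge. -/
noncomputable def cyclicPairs (k : ℕ) (G : SimpleGraph V) : Finset (V × V) :=
  {p | G.Adj p.1 p.2 ∧ ¬ G.IsBridge s(p.1, p.2) ∧ componentOrder G p.1 ≤ k}

theorem mem_cyclicPairs : (w, x) ∈ cyclicPairs k G ↔
    G.Adj w x ∧ ¬ G.IsBridge s(w, x) ∧ componentOrder G w ≤ k := by
  simp [cyclicPairs]

theorem IsComponent.cyclicPairs_nonempty {W : Finset V} (hW : IsComponent G W)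
    (hk : W.card ≤ k) (hc : ¬ (G.induce (W : Set V)).IsAcyclic) : (cyclicPairs k G).Nonempty := by
  rw [isAcyclic_iff_forall_adj_isBridge] at hc
  push Not at hc
  obtain ⟨a, b, hab, hbr⟩ := hc
  refine ⟨(a.1, b.1), mem_cyclicPairs.2 ⟨hab, fun h => hbr ?_,
    (hW.componentOrder_le_card a.2).trans hk⟩⟩
  rw [isBridge_iff_forall_cycle_notMem (by exact hab)]
  intro y p hp hmem
  refine h.notMem_edges_of_isCycle
    (hp.map (f := (Embedding.induce (G := G) (W : Set V)).toHom) Subtype.val_injective) ?_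
  rw [Walk.edges_map]
  exact List.mem_map_of_mem hmem

end CyclicPairs

section SwitchEdge

variable {V : Type*} {k : ℕ} {G G₁ G₂ : SimpleGraph V} {w x v : V}

/-- The *switching* that replaces the edge `wx` of `G` by `wv`. -/
def switchEdge (G : SimpleGraph V) (w x v : V) : SimpleGraph V :=
  G.deleteEdges {s(w, x)} ⊔ edge w v

theorem not_reachable_deleteEdges (hv : ¬ G.Reachable w v) (s : Set (Sym2 V)) :
    ¬ (G.deleteEdges s).Reachable w v :=
  fun h => hv (h.mono (deleteEdges_le _))

theorem IsPlanar.switchEdge (hG : IsPlanar G) (hv : ¬ G.Reachable w v) :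
    IsPlanar (switchEdge G w x v) :=
  (hG.anti (deleteEdges_le _)).sup_edge (not_reachable_deleteEdges hv _)

theorem switchEdge_deleteEdges (hv : ¬ G.Reachable w v) :
    (switchEdge G w x v).deleteEdges {s(w, v)} = G.deleteEdges {s(w, x)} := by
  refine Disjoint.sup_sdiff_cancel_right ?_
  rw [disjoint_edge]
  exact fun h => not_reachable_deleteEdges hv _ h.reachable

theorem edgeCount_switchEdge [Finite V] (hwx : G.Adj w x) (hv : ¬ G.Reachable w v) :
    edgeCount (switchEdge G w x v) = edgeCount G := by
  have hne : w ≠ v := by rintro rfl; exact hv .rfl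
  have hedges : (switchEdge G w x v).edgeSet = insert s(w, v) (G.edgeSet \ {s(w, x)}) := by
    rw [switchEdge, edgeSet_sup, edgeSet_edge_of_ne hne, edgeSet_deleteEdges, Set.union_singleton]
  have hwv : s(w, v) ∉ G.edgeSet \ {s(w, x)} := fun h => hv (Adj.reachable h.1)
  rw [edgeCount, hedges, Set.ncard_insert_of_notMem hwv,
    Set.ncard_sdiff_singleton_add_one (by exact hwx), edgeCount]

theorem isBridge_switchEdge (hv : ¬ G.Reachable w v) :
    (switchEdge G w x v).IsBridge s(w, v) :=
  isBridge_sup_edge.2 (.of_not_reachable (not_reachable_deleteEdges hv _))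

theorem eq_of_switchEdge_eq (hG₁ : G₁.Adj w x) (hG₂ : G₂.Adj w x)
    (hv₁ : ¬ G₁.Reachable w v) (hv₂ : ¬ G₂.Reachable w v)
    (h : switchEdge G₁ w x v = switchEdge G₂ w x v) : G₁ = G₂ := by
  have restore {G : SimpleGraph V} (hG : G.Adj w x) : G.deleteEdges {s(w, x)} ⊔ edge w x = G :=
    sdiff_sup_cancel ((edge_le_iff _).2 (.inr hG))
  rw [← restore hG₁, ← restore hG₂, ← switchEdge_deleteEdges hv₁, ← switchEdge_deleteEdges hv₂, h]

theorem reachable_switchEdge (hwx : ¬ G.IsBridge s(w, x)) {a b : V} (h : G.Reachable a b) :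
    (switchEdge G w x v).Reachable a b :=
  (reachable_deleteEdges_of_not_isBridge hwx h).mono le_sup_left

variable [Fintype V]

theorem cyclicPairs_switchEdge_ssubset (hwx : (w, x) ∈ cyclicPairs k G)
    (hv : ¬ G.Reachable w v) : cyclicPairs k (switchEdge G w x v) ⊂ cyclicPairs k G := by
  obtain ⟨hadj, hbr, -⟩ := mem_cyclicPairs.1 hwx
  have hv' := not_reachable_deleteEdges hv {s(w, x)}
  rw [Finset.ssubset_iff_of_subset]
  · refine ⟨(w, x), hwx, fun h => ?_⟩
    obtain h | h := (mem_cyclicPairs.1 h).1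
    · exact (deleteEdges_adj.1 h).2 rfl
    · obtain ⟨-, rfl⟩ | ⟨rfl, rfl⟩ := ((edge_adj ..).1 h).1
      · exact hv hadj.reachable
      · exact hv .rfl
  · rintro ⟨a, b⟩ hab
    obtain ⟨hab, hbr', hk⟩ := mem_cyclicPairs.1 hab
    have habG : (G.deleteEdges {s(w, x)}).Adj a b := by
      refine hab.resolve_right fun h => hbr' ?_
      rw [← (adj_edge ..).1 h |>.1]
      exact isBridge_switchEdge hv
    refine mem_cyclicPairs.2 ⟨deleteEdges_le _ habG, fun hb => hbr' ?_,
      (componentOrder_mono fun _ => reachable_switchEdge hbr).trans hk⟩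
    exact (hb.anti (deleteEdges_le _)).sup_edge_of_not_reachable_of_isBridge hv' habG

end SwitchEdge

section Bridges

variable {V : Type*}

/-- The spanning subgraph of `G` formed by the bridges of `G`. -/
def bridgeGraph (G : SimpleGraph V) : SimpleGraph V where
  Adj a b := G.Adj a b ∧ G.IsBridge s(a, b)
  symm := ⟨fun _ _ h => ⟨h.1.symm, Sym2.eq_swap ▸ h.2⟩⟩
  loopless := ⟨fun _ h => h.1.ne rfl⟩

theorem isAcyclic_bridgeGraph (G : SimpleGraph V) : (bridgeGraph G).IsAcyclic :=
  isAcyclic_iff_forall_adj_isBridge.2 fun _ _ h => h.2.anti fun _ _ h => h.1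

theorem card_edgeFinset_le_card_of_isAcyclic [Fintype V] {F : SimpleGraph V} [Fintype F.edgeSet]
    (hF : F.IsAcyclic) : F.edgeFinset.card ≤ Fintype.card V := by
  classical
  cases isEmpty_or_nonempty V
  · simp [Subsingleton.elim F ⊥]
  obtain ⟨T, hFT, -, hT⟩ := connected_top.exists_isTree_le_of_le_of_isAcyclic le_top hF
  calc F.edgeFinset.card ≤ T.edgeFinset.card := Finset.card_le_card (edgeFinset_mono hFT)
    _ ≤ T.edgeFinset.card + 1 := Nat.le_succ _
    _ = Fintype.card V := hT.card_edgeFinset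

open scoped Classical in
theorem card_bridges_le [Fintype V] (G : SimpleGraph V) :
    ({p | G.Adj p.1 p.2 ∧ G.IsBridge s(p.1, p.2)} : Finset (V × V)).card ≤ 2 * Fintype.card V :=
  calc _ = 2 * (bridgeGraph G).edgeFinset.card := by rw [two_mul_card_edgeFinset]; congr!
    _ ≤ 2 * Fintype.card V :=
      Nat.mul_le_mul_left 2 (card_edgeFinset_le_card_of_isAcyclic (isAcyclic_bridgeGraph G))

end Bridges

section DoubleCounting

variable {V : Type*} [Fintype V] {k : ℕ} {G : SimpleGraph V} {w x v : V}

open scoped Classical in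
/-- The choices for a switching in `G`: a cyclic pair `(w, x)` and a vertex `v` outside its
component. -/
noncomputable def switchChoices (k : ℕ) (G : SimpleGraph V) : Finset ((_ : V × V) × V) :=
  (cyclicPairs k G).sigma fun p => {v | ¬ G.Reachable p.1 v}

theorem mem_switchChoices :
    ⟨(w, x), v⟩ ∈ switchChoices k G ↔ (w, x) ∈ cyclicPairs k G ∧ ¬ G.Reachable w v := by
  simp [switchChoices]

theorem le_card_switchChoices :
    (cyclicPairs k G).card * (Fintype.card V - k) ≤ (switchChoices k G).card := by
  classical
  rw [switchChoices, Finset.card_sigma]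
  refine Finset.card_nsmul_le_sum _ _ _ ?_
  rintro ⟨w, x⟩ hwx
  have hk : componentOrder G w ≤ k := (mem_cyclicPairs.1 hwx).2.2
  have hcomp :
      ({v | ¬ G.Reachable w v} : Finset V) = (G.connectedComponentMk w).supp.toFinsetᶜ := by
    ext v
    simp [reachable_comm]
  rw [hcomp, Finset.card_compl, ← Set.ncard_eq_toFinset_card']
  exact Nat.sub_le_sub_left hk _

open scoped Classical in
/-- The data needed to undo a switching that led to `G`: an oriented bridge `(w, v)`, whose removal
leaves `w` in a component of order at most `k`, and a vertex `x` of that component. -/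
noncomputable def undoChoices (k : ℕ) (G : SimpleGraph V) : Finset ((_ : V × V) × V) :=
  ({p | (G.Adj p.1 p.2 ∧ G.IsBridge s(p.1, p.2)) ∧
      componentOrder (G.deleteEdges {s(p.1, p.2)}) p.1 ≤ k} : Finset (V × V)).sigma
    fun p => ((G.deleteEdges {s(p.1, p.2)}).connectedComponentMk p.1).supp.toFinset

theorem card_undoChoices_le : (undoChoices k G).card ≤ 2 * Fintype.card V * k := by
  classical
  rw [undoChoices, Finset.card_sigma]
  refine (Finset.sum_le_card_nsmul _ _ k fun p hp => ?_).trans (Nat.mul_le_mul_right k ?_)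
  · rw [← Set.ncard_eq_toFinset_card']
    exact (Finset.mem_filter.1 hp).2.2
  · rw [← Finset.filter_filter]
    exact (Finset.card_filter_le _ _).trans (card_bridges_le G)

theorem mem_undoChoices_switchEdge (h : ⟨(w, x), v⟩ ∈ switchChoices k G) :
    ⟨(w, v), x⟩ ∈ undoChoices k (switchEdge G w x v) := by
  obtain ⟨hwx, hv⟩ := mem_switchChoices.1 h
  obtain ⟨hadj, hbr, hk⟩ := mem_cyclicPairs.1 hwx
  have hne : w ≠ v := by rintro rfl; exact hv .rfl
  simp only [undoChoices, Finset.mem_sigma, Finset.mem_filter, Finset.mem_univ, true_and,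
    Set.mem_toFinset, switchEdge_deleteEdges hv]
  refine ⟨⟨⟨.inr ((adj_edge ..).2 ⟨rfl, hne⟩), isBridge_switchEdge hv⟩, ?_⟩, ?_⟩
  · exact (componentOrder_mono fun _ hy => hy.mono (deleteEdges_le _)).trans hk
  · rw [switchEdge_deleteEdges hv]
    exact ConnectedComponent.sound (reachable_deleteEdges_of_not_isBridge hbr hadj.symm.reachable)

/-- Every switching of a graph of `S` lies in `T`. -/
def SwitchingsMapTo (k : ℕ) (S T : Set (SimpleGraph V)) : Prop :=
  ∀ G ∈ S, ∀ w x v, ⟨(w, x), v⟩ ∈ switchChoices k G → switchEdge G w x v ∈ T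

theorem SwitchingsMapTo.sum_card_switchChoices_le {S T : Finset (SimpleGraph V)}
    (hST : SwitchingsMapTo k (S : Set (SimpleGraph V)) T) :
    ∑ G ∈ S, (switchChoices k G).card ≤ ∑ G ∈ T, (undoChoices k G).card := by
  rw [← Finset.card_sigma, ← Finset.card_sigma]
  refine Finset.card_le_card_of_injOn
    (fun ⟨G, ⟨w, x⟩, v⟩ => ⟨switchEdge G w x v, (w, v), x⟩) ?_ ?_
  · rintro ⟨G, ⟨w, x⟩, v⟩ h
    obtain ⟨hG, h⟩ := Finset.mem_sigma.1 h
    exact Finset.mem_sigma.2 ⟨hST G hG w x v h, mem_undoChoices_switchEdge h⟩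
  · rintro ⟨G₁, ⟨w, x⟩, v⟩ h₁ ⟨G₂, ⟨w', x'⟩, v'⟩ h₂ heq
    simp only [Sigma.mk.injEq, Prod.mk.injEq, heq_eq_eq] at heq
    obtain ⟨heq, ⟨rfl, rfl⟩, rfl⟩ := heq
    obtain ⟨hwx₁, hv₁⟩ := mem_switchChoices.1 (Finset.mem_sigma.1 h₁).2
    obtain ⟨hwx₂, hv₂⟩ := mem_switchChoices.1 (Finset.mem_sigma.1 h₂).2
    obtain rfl := eq_of_switchEdge_eq (mem_cyclicPairs.1 hwx₁).1 (mem_cyclicPairs.1 hwx₂).1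
      hv₁ hv₂ heq
    rfl

theorem SwitchingsMapTo.sum_card_cyclicPairs_le (hn : 2 * k ≤ Fintype.card V)
    {S T : Finset (SimpleGraph V)} (hST : SwitchingsMapTo k (S : Set (SimpleGraph V)) T) :
    ∑ G ∈ S, (cyclicPairs k G).card ≤ 4 * k * T.card := by
  cases isEmpty_or_nonempty V
  · simp [Finset.eq_empty_of_isEmpty]
  have hpos : 0 < Fintype.card V := Fintype.card_pos
  refine Nat.le_of_mul_le_mul_right ?_ (show 0 < Fintype.card V - k by omega)
  calc (∑ G ∈ S, (cyclicPairs k G).card) * (Fintype.card V - k)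
      ≤ ∑ G ∈ S, (switchChoices k G).card := by
        rw [Finset.sum_mul]
        exact Finset.sum_le_sum fun G _ => le_card_switchChoices
    _ ≤ ∑ G ∈ T, (undoChoices k G).card := hST.sum_card_switchChoices_le
    _ ≤ T.card * (2 * Fintype.card V * k) :=
        Finset.sum_le_card_nsmul _ _ _ fun G _ => card_undoChoices_le
    _ ≤ T.card * (2 * (2 * (Fintype.card V - k)) * k) := by gcongr; omega
    _ = 4 * k * T.card * (Fintype.card V - k) := by ring

end DoubleCounting

/-! ### From double counting to the probability bound -/

section Counting

variable {α : Type*} {P : Finset α} {Y : α → ℕ} {c : ℕ}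

theorem card_le_two_mul_card_filter_le (hmean : ∑ a ∈ P, Y a ≤ c * P.card) :
    P.card ≤ 2 * (P.filter fun a => Y a ≤ 2 * c).card := by
  have hmarkov : (P.filter fun a => ¬ Y a ≤ 2 * c).card * (2 * c + 1) ≤ c * P.card :=
    calc _ ≤ ∑ a ∈ P.filter fun a => ¬ Y a ≤ 2 * c, Y a :=
          Finset.card_nsmul_le_sum _ _ _ fun a ha => not_le.1 (Finset.mem_filter.1 ha).2
      _ ≤ ∑ a ∈ P, Y a := Finset.sum_le_sum_of_subset (Finset.filter_subset _ _)
      _ ≤ c * P.card := hmean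
  have hsplit := P.card_filter_add_card_filter_not fun a => Y a ≤ 2 * c
  nlinarith

theorem card_filter_le_le_pow_mul
    (hstep : ∀ i, (P.filter fun a => Y a = i + 1).card ≤ c * (P.filter fun a => Y a ≤ i).card)
    (i : ℕ) :
    (P.filter fun a => Y a ≤ i).card ≤ (1 + c) ^ i * (P.filter fun a => Y a = 0).card := by
  classical
  induction i with
  | zero => simp
  | succ i ih =>
    calc (P.filter fun a => Y a ≤ i + 1).card
        ≤ (P.filter fun a => Y a ≤ i).card + (P.filter fun a => Y a = i + 1).card := by
          simp only [Nat.le_add_one_iff, Finset.filter_or]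
          exact Finset.card_union_le _ _
      _ ≤ (1 + c) * (P.filter fun a => Y a ≤ i).card := by linarith [hstep i]
      _ ≤ (1 + c) * ((1 + c) ^ i * (P.filter fun a => Y a = 0).card) := Nat.mul_le_mul_left _ ih
      _ = (1 + c) ^ (i + 1) * (P.filter fun a => Y a = 0).card := by ring

theorem card_le_mul_card_filter_eq_zero (hmean : ∑ a ∈ P, Y a ≤ c * P.card)
    (hstep : ∀ i, (P.filter fun a => Y a = i + 1).card ≤ c * (P.filter fun a => Y a ≤ i).card) :
    P.card ≤ 2 * (1 + c) ^ (2 * c) * (P.filter fun a => Y a = 0).card := by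
  rw [mul_assoc]
  exact (card_le_two_mul_card_filter_le hmean).trans
    (Nat.mul_le_mul_left 2 (card_filter_le_le_pow_mul hstep _))

end Counting

theorem SwitchingsMapTo.card_le_mul_card_filter {V : Type*} [Fintype V] {k : ℕ}
    (hn : 2 * k ≤ Fintype.card V) {P : Finset (SimpleGraph V)}
    (hP : SwitchingsMapTo k (P : Set (SimpleGraph V)) P) :
    P.card ≤ 2 * (1 + 4 * k) ^ (8 * k) * (P.filter fun G => (cyclicPairs k G).card = 0).card := by
  rw [show 8 * k = 2 * (4 * k) by ring]
  refine card_le_mul_card_filter_eq_zero (hP.sum_card_cyclicPairs_le hn) fun i => ?_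
  have hST : SwitchingsMapTo k
      (P.filter fun G => (cyclicPairs k G).card = i + 1 : Set (SimpleGraph V))
      (P.filter fun G => (cyclicPairs k G).card ≤ i : Finset (SimpleGraph V)) := by
    intro G hG w x v h
    obtain ⟨hGP, hi⟩ := Finset.mem_filter.1 hG
    obtain ⟨hwx, hv⟩ := mem_switchChoices.1 h
    have hlt := Finset.card_lt_card (cyclicPairs_switchEdge_ssubset hwx hv)
    exact Finset.mem_filter.2 ⟨hP G hGP w x v h, by omega⟩
  calc (P.filter fun G => (cyclicPairs k G).card = i + 1).card
      ≤ ∑ G ∈ P.filter fun G => (cyclicPairs k G).card = i + 1, (cyclicPairs k G).card := by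
        rw [Finset.card_eq_sum_ones]
        refine Finset.sum_le_sum fun G hG => ?_
        rw [(Finset.mem_filter.1 hG).2]
        exact Nat.le_add_left 1 i
    _ ≤ 4 * k * (P.filter fun G => (cyclicPairs k G).card ≤ i).card :=
        hST.sum_card_cyclicPairs_le hn

section PlanarProb

variable {k n m : ℕ}

theorem switchingsMapTo_planarSet : SwitchingsMapTo k (planarSet n m) (planarSet n m) := by
  rintro G ⟨hG, hm⟩ w x v h
  obtain ⟨hwx, hv⟩ := mem_switchChoices.1 h
  exact ⟨hG.switchEdge hv, (edgeCount_switchEdge (mem_cyclicPairs.1 hwx).1 hv).trans hm⟩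

theorem ncard_planarSet_le (hn : 2 * k ≤ n) :
    (planarSet n m).ncard ≤
      2 * (1 + 4 * k) ^ (8 * k) * {G ∈ planarSet n m | cyclicPairs k G = ∅}.ncard := by
  obtain ⟨P, hP⟩ := (planarSet n m).toFinite.exists_finset_coe
  have hclosed : SwitchingsMapTo k (planarSet n m) (planarSet n m) := switchingsMapTo_planarSet
  rw [← hP] at hclosed ⊢
  have h := hclosed.card_le_mul_card_filter (by simpa using hn)
  simp only [Finset.card_eq_zero] at h
  simpa only [← Set.ncard_coe_finset, Finset.coe_filter, Finset.mem_coe] using h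

theorem planarProb_le_one_sub_one_div {P : SimpleGraph (Fin n) → Prop} {C : ℝ} (hC : 0 < C)
    (hne : (planarSet n m).Nonempty)
    (h : ((planarSet n m).ncard : ℝ) ≤ C * ({G ∈ planarSet n m | ¬ P G}.ncard : ℝ)) :
    planarProb n m P ≤ 1 - 1 / C := by
  have hpos : (0 : ℝ) < (planarSet n m).ncard := by
    exact_mod_cast (Set.ncard_pos (Set.toFinite _)).2 hne
  have hsplit : ({G ∈ planarSet n m | P G}.ncard : ℝ) + {G ∈ planarSet n m | ¬ P G}.ncard =
      (planarSet n m).ncard := by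
    rw [← Set.ncard_inter_add_ncard_sdiff_eq_ncard (planarSet n m) {G | P G} (Set.toFinite _)]
    push_cast
    rfl
  rw [planarProb, div_le_iff₀ hpos, sub_mul, one_mul, one_div_mul_eq_div, le_sub_comm,
    div_le_iff₀' hC]
  rwa [← hsplit, add_sub_cancel_left, hsplit]

theorem planarProb_nonacyclic_small_component_le (hn : 2 * k ≤ n)
    (hne : (planarSet n m).Nonempty) :
    planarProb n m (fun G => ∃ W : Finset (Fin n),
      IsComponent G W ∧ W.card ≤ k ∧ ¬ (G.induce (W : Set (Fin n))).IsAcyclic) ≤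
      1 - 1 / (2 * (1 + 4 * k) ^ (8 * k) : ℝ) := by
  refine planarProb_le_one_sub_one_div (by positivity) hne ?_
  have hmono : {G ∈ planarSet n m | cyclicPairs k G = ∅} ⊆
      {G ∈ planarSet n m | ¬ ∃ W : Finset (Fin n),
        IsComponent G W ∧ W.card ≤ k ∧ ¬ (G.induce (W : Set (Fin n))).IsAcyclic} := by
    rintro G ⟨hG, hempty⟩
    refine ⟨hG, fun ⟨W, hW, hk, hc⟩ => ?_⟩
    exact (hW.cyclicPairs_nonempty hk hc).ne_empty hempty
  exact_mod_cast (ncard_planarSet_le hn).trans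
    (Nat.mul_le_mul_left _ (Set.ncard_le_ncard hmono (Set.toFinite _)))

end PlanarProb

theorem nonacyclic_small_component_not_whp (k : ℕ) (hk : 0 < k) (m : ℕ → ℕ)
    (hne : ∀ᶠ n : ℕ in atTop, (planarSet n (m n)).Nonempty) :
    limsup (fun n : ℕ =>
        planarProb n (m n) fun G => ∃ W : Finset (Fin n),
          IsComponent G W ∧ W.card ≤ k ∧ ¬ (G.induce (W : Set (Fin n))).IsAcyclic)
      atTop < 1 := by
  have hC : (0 : ℝ) < 1 / (2 * (1 + 4 * k) ^ (8 * k)) := by positivity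
  refine (limsup_le_of_le ?_ ?_).trans_lt (sub_lt_self 1 hC)
  · refine IsBoundedUnder.isCoboundedUnder_le (isBoundedUnder_of ⟨0, fun n => ?_⟩)
    exact div_nonneg (Nat.cast_nonneg _) (Nat.cast_nonneg _)
  · filter_upwards [hne, eventually_ge_atTop (2 * k)] with n hne hn
    exact planarProb_nonacyclic_small_component_le hn hne
end
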